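/- arXiv:2006.14014 — 12 statements merged into one kernel-verified Lean document; each statement's English description precedes it below -/
import Mathlib

section
/- Let A be a finite-dimensional left Leibniz algebra over a field F and let B and C be subspaces of A. Define B^1 = B and B^{n+1} = B·B^n (the span of all products b·x with b ∈ B, x ∈ B^n). Then for every n ≥ 1, f(B^n, C) ⊆ f^n(B, C). -/
open Submodule

section LeibnizDefs

variable {F : Type*} {A : Type*} [Field F] [AddCommGroup A] [Module F A]

/-- The span of all products `b*c` with `b ∈ B`, `c ∈ C`. -/
def mulSub (mul : A →ₗ[F] A →ₗ[F] A) (B C : Submodule F A) : Submodule F A :=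
  Submodule.span F {z : A | ∃ b ∈ B, ∃ c ∈ C, mul b c = z}

/-- `fSub mul B C = B·C + C·B`, the function `f(B,C)`. -/
def fSub (mul : A →ₗ[F] A →ₗ[F] A) (B C : Submodule F A) : Submodule F A :=
  mulSub mul B C ⊔ mulSub mul C B

/-- `fIter mul B C n = f^{n+1}(B,C)` (so index `0` is `f^1(B,C) = f(B,C)`). -/
def fIter (mul : A →ₗ[F] A →ₗ[F] A) (B C : Submodule F A) : ℕ → Submodule F A
  | 0 => fSub mul B C
  | n + 1 => fSub mul B (fIter mul B C n)

/-- `lcs mul B n = B^{n+1}`, the lower central series (index `0` is `B^1 = B`). -/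
def lcs (mul : A →ₗ[F] A →ₗ[F] A) (B : Submodule F A) : ℕ → Submodule F A
  | 0 => B
  | n + 1 => mulSub mul B (lcs mul B n)

/-- `ds mul B n = B^{(n+1)}`, the derived series (index `0` is `B^{(1)} = B`). -/
def ds (mul : A →ₗ[F] A →ₗ[F] A) (B : Submodule F A) : ℕ → Submodule F A
  | 0 => B
  | n + 1 => mulSub mul (ds mul B n) (ds mul B n)

/-- `B^ω = ⋂_{i ≥ 1} B^i`. -/
def omegaSub (mul : A →ₗ[F] A →ₗ[F] A) (B : Submodule F A) : Submodule F A :=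
  ⨅ n, lcs mul B n

/-- `B` is a subalgebra: a subspace closed under multiplication. -/
def IsSubalg (mul : A →ₗ[F] A →ₗ[F] A) (B : Submodule F A) : Prop :=
  ∀ x ∈ B, ∀ y ∈ B, mul x y ∈ B

/-- `I` is an ideal of the subalgebra `S`: `I ⊆ S` and `xI + Ix ⊆ I` for all `x ∈ S`. -/
def IsIdealIn (mul : A →ₗ[F] A →ₗ[F] A) (I S : Submodule F A) : Prop :=
  I ≤ S ∧ ∀ x ∈ S, ∀ y ∈ I, mul x y ∈ I ∧ mul y x ∈ I

/-- `B` is subinvariant in `S`: there is a chain of subalgebras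
`B = c 0 ⊆ c 1 ⊆ ⋯ ⊆ c t = S` with each term an ideal of the next. -/
def IsSubinvariantIn (mul : A →ₗ[F] A →ₗ[F] A) (B S : Submodule F A) : Prop :=
  ∃ (t : ℕ) (c : ℕ → Submodule F A), c 0 = B ∧ c t = S ∧
    (∀ i ≤ t, IsSubalg mul (c i)) ∧ ∀ i < t, IsIdealIn mul (c i) (c (i + 1))

/-- `B` is nilpotent: `B^m = 0` for some `m`. -/
def IsNilpotentSub (mul : A →ₗ[F] A →ₗ[F] A) (B : Submodule F A) : Prop :=
  ∃ m, lcs mul B m = ⊥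

/-- `B` is solvable: `B^{(m)} = 0` for some `m`. -/
def IsSolvableSub (mul : A →ₗ[F] A →ₗ[F] A) (B : Submodule F A) : Prop :=
  ∃ m, ds mul B m = ⊥

/-- The centralizer `Z_A(B) = {x : xb = 0 = bx for all b ∈ B}`. -/
def centralizerSet (mul : A →ₗ[F] A →ₗ[F] A) (B : Submodule F A) : Set A :=
  {x : A | ∀ b ∈ B, mul x b = 0 ∧ mul b x = 0}

/-- `R` is the radical (the maximal solvable ideal) of the subalgebra `S`. -/
def IsRadicalIn (mul : A →ₗ[F] A →ₗ[F] A) (S R : Submodule F A) : Prop :=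
  IsIdealIn mul R S ∧ IsSolvableSub mul R ∧
    ∀ T, IsIdealIn mul T S → IsSolvableSub mul T → T ≤ R

/-- `N` is the nilradical (the maximal nilpotent ideal) of the subalgebra `S`. -/
def IsNilradicalIn (mul : A →ₗ[F] A →ₗ[F] A) (S N : Submodule F A) : Prop :=
  IsIdealIn mul N S ∧ IsNilpotentSub mul N ∧
    ∀ T, IsIdealIn mul T S → IsNilpotentSub mul T → T ≤ N

/-- `H` is a Cartan subalgebra: a nilpotent self-normalizing subalgebra. -/
def IsCartan (mul : A →ₗ[F] A →ₗ[F] A) (H : Submodule F A) : Prop :=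
  IsSubalg mul H ∧ IsNilpotentSub mul H ∧
    ∀ x : A, (∀ h ∈ H, mul x h ∈ H ∧ mul h x ∈ H) → x ∈ H

/-- The subalgebra generated by a set: the smallest subalgebra containing it. -/
def subalgGen (mul : A →ₗ[F] A →ₗ[F] A) (s : Set A) : Submodule F A :=
  sInf {S : Submodule F A | IsSubalg mul S ∧ s ⊆ (S : Set A)}

end LeibnizDefs

theorem mem_fSub_left {F A : Type*} [Field F] [AddCommGroup A] [Module F A]
    (mul : A →ₗ[F] A →ₗ[F] A) {B C : Submodule F A} {b c : A} (hb : b ∈ B) (hc : c ∈ C) :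
    mul b c ∈ fSub mul B C :=
  Submodule.mem_sup_left (Submodule.subset_span ⟨b, hb, c, hc, rfl⟩)

theorem mem_fSub_right {F A : Type*} [Field F] [AddCommGroup A] [Module F A]
    (mul : A →ₗ[F] A →ₗ[F] A) {B C : Submodule F A} {b c : A} (hb : b ∈ B) (hc : c ∈ C) :
    mul c b ∈ fSub mul B C :=
  Submodule.mem_sup_right (Submodule.subset_span ⟨c, hc, b, hb, rfl⟩)

theorem fIter_shift {F A : Type*} [Field F] [AddCommGroup A] [Module F A]
    (mul : A →ₗ[F] A →ₗ[F] A) (B C : Submodule F A) (n : ℕ) :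
    fIter mul B (fSub mul B C) n = fIter mul B C (n + 1) := by
  induction n with
  | zero => rfl
  | succ n ih =>
    change fSub mul B (fIter mul B (fSub mul B C) n) = fSub mul B (fIter mul B C (n + 1))
    rw [ih]


/-- for every `n ≥ 1`, `f(B^n, C) ⊆ f^n(B, C)`
(here index `n : ℕ` corresponds to the paper's `n + 1 ≥ 1`). -/
theorem stmt_0 {F A : Type*} [Field F] [AddCommGroup A] [Module F A] [FiniteDimensional F A]
    (mul : A →ₗ[F] A →ₗ[F] A)
    (hleib : ∀ x y z : A, mul x (mul y z) = mul (mul x y) z + mul y (mul x z))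
    (B C : Submodule F A) (n : ℕ) :
    fSub mul (lcs mul B n) C ≤ fIter mul B C n := by
  induction n generalizing C with
  | zero => exact le_refl _
  | succ n ih =>
    have key : ∀ y ∈ lcs mul B (n + 1), ∀ c ∈ C,
        mul y c ∈ fIter mul B C (n + 1) ∧ mul c y ∈ fIter mul B C (n + 1) := by
      intro y hy c hc
      change y ∈ Submodule.span F _ at hy
      induction hy using Submodule.span_induction with
      | mem y hy =>
        obtain ⟨b, hb, x, hx, rfl⟩ := hy
        have ih2 := ih (fSub mul B C)
        rw [fIter_shift] at ih2
        have h1 : mul b (mul x c) ∈ fIter mul B C (n + 1) :=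
          mem_fSub_left mul hb (ih C (mem_fSub_left mul hx hc))
        have h2 : mul b (mul c x) ∈ fIter mul B C (n + 1) :=
          mem_fSub_left mul hb (ih C (mem_fSub_right mul hx hc))
        have h3 : mul x (mul b c) ∈ fIter mul B C (n + 1) :=
          ih2 (mem_fSub_left mul hx (mem_fSub_left mul hb hc))
        have h4 : mul (mul c b) x ∈ fIter mul B C (n + 1) :=
          ih2 (mem_fSub_right mul hx (mem_fSub_right mul hb hc))
        refine ⟨?_, ?_⟩
        · rw [eq_sub_of_add_eq (hleib b x c).symm]
          exact Submodule.sub_mem _ h1 h3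
        · rw [hleib c b x]
          exact Submodule.add_mem _ h4 h2
      | zero => simp
      | add y z _ _ h1 h2 =>
        simp only [map_add, LinearMap.add_apply]
        exact ⟨Submodule.add_mem _ h1.1 h2.1, Submodule.add_mem _ h1.2 h2.2⟩
      | smul a y _ h =>
        simp only [map_smul, LinearMap.smul_apply]
        exact ⟨Submodule.smul_mem _ _ h.1, Submodule.smul_mem _ _ h.2⟩
    refine sup_le (Submodule.span_le.2 ?_) (Submodule.span_le.2 ?_)
    · rintro _ ⟨y, hy, c, hc, rfl⟩
      exact (key y hy c hc).1
    · rintro _ ⟨c, hc, y, hy, rfl⟩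
      exact (key y hy c hc).2
end

section
/- Let A be a finite-dimensional left Leibniz algebra over a field F and let B be a subinvariant subalgebra of A. Then B^ω = ⋂_{i≥1} B^i is an ideal of A. -/
open Submodule

theorem aux_right {F A : Type*} [Field F] [AddCommGroup A] [Module F A]
    (mul : A →ₗ[F] A →ₗ[F] A)
    (hleib : ∀ x y z : A, mul x (mul y z) = mul (mul x y) z + mul y (mul x z))
    (B : Submodule F A) (H : ℕ → Submodule F A)
    (hl : ∀ j, ∀ b ∈ B, ∀ x ∈ H j, mul b x ∈ H (j + 1)) (n : ℕ) :
    ∀ j, ∀ y ∈ lcs mul B n, ∀ x ∈ H j, mul y x ∈ H (j + n + 1) := by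
  induction n with
  | zero => exact hl
  | succ n ih =>
    intro j y hy x hx
    change y ∈ Submodule.span F _ at hy
    induction hy using Submodule.span_induction with
    | mem y hy =>
      obtain ⟨b, hb, z, hz, rfl⟩ := hy
      have e : mul (mul b z) x = mul b (mul z x) - mul z (mul b x) := by
        rw [hleib b z x]; abel
      rw [e]
      have h1 := hl _ b hb _ (ih j z hz x hx)
      have h2 := ih (j + 1) z hz _ (hl j b hb x hx)
      have e2 : j + 1 + n + 1 = j + (n + 1) + 1 := by omega
      rw [e2] at h2
      exact Submodule.sub_mem _ h1 h2
    | zero => simp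
    | add u v _ _ hu hv => rw [map_add, LinearMap.add_apply]; exact Submodule.add_mem _ hu hv
    | smul a u _ hu => rw [map_smul, LinearMap.smul_apply]; exact Submodule.smul_mem _ a hu

theorem aux_left {F A : Type*} [Field F] [AddCommGroup A] [Module F A]
    (mul : A →ₗ[F] A →ₗ[F] A)
    (hleib : ∀ x y z : A, mul x (mul y z) = mul (mul x y) z + mul y (mul x z))
    (B : Submodule F A) (H : ℕ → Submodule F A)
    (hl : ∀ j, ∀ b ∈ B, ∀ x ∈ H j, mul b x ∈ H (j + 1))
    (hr : ∀ j, ∀ b ∈ B, ∀ x ∈ H j, mul x b ∈ H (j + 1)) (n : ℕ) :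
    ∀ j, ∀ y ∈ lcs mul B n, ∀ x ∈ H j, mul x y ∈ H (j + n + 1) := by
  induction n with
  | zero => exact hr
  | succ n ih =>
    intro j y hy x hx
    change y ∈ Submodule.span F _ at hy
    induction hy using Submodule.span_induction with
    | mem y hy =>
      obtain ⟨b, hb, z, hz, rfl⟩ := hy
      rw [hleib x b z]
      have h1 := hl _ b hb _ (ih j z hz x hx)
      have h2 := ih (j + 1) z hz _ (hr j b hb x hx)
      have e2 : j + 1 + n + 1 = j + (n + 1) + 1 := by omega
      rw [e2] at h2
      exact Submodule.add_mem _ h2 h1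
    | zero => simp
    | add u v _ _ hu hv => rw [map_add]; exact Submodule.add_mem _ hu hv
    | smul a u _ hu => rw [map_smul]; exact Submodule.smul_mem _ a hu

/-- if `B` is subinvariant in `A`, then `B^ω` is an ideal of `A`. -/
theorem stmt_2 {F A : Type*} [Field F] [AddCommGroup A] [Module F A] [FiniteDimensional F A]
    (mul : A →ₗ[F] A →ₗ[F] A)
    (hleib : ∀ x y z : A, mul x (mul y z) = mul (mul x y) z + mul y (mul x z))
    (B : Submodule F A) (hB : IsSubinvariantIn mul B ⊤) :
    IsIdealIn mul (omegaSub mul B) ⊤ := by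
  obtain ⟨t, c, h0, ht, hsub, hid⟩ := hB
  have hL : ∀ j, ∀ b ∈ B, ∀ x ∈ lcs mul B j, mul b x ∈ lcs mul B (j + 1) :=
    fun j b hb x hx => Submodule.subset_span ⟨b, hb, x, hx, rfl⟩
  have hR : ∀ j, ∀ b ∈ B, ∀ x ∈ lcs mul B j, mul x b ∈ lcs mul B (j + 1) := by
    intro j b hb x hx
    have := aux_right mul hleib B (lcs mul B) hL j 0 x hx b hb
    rwa [Nat.zero_add] at this
  have hBc : ∀ i ≤ t, B ≤ c i := by
    intro i
    induction i with
    | zero => intro _; exact h0.ge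
    | succ i ih => intro hi; exact (ih (by omega)).trans (hid i (by omega)).1
  let H : ℕ → Submodule F A := fun j => if j < t then c (t - j) else lcs mul B (j - t)
  have H1 : ∀ j, j ≤ t → H j = c (t - j) := by
    intro j hj
    by_cases h : j < t
    · simp [H, h]
    · have : j = t := by omega
      subst this
      simp [H, h0, lcs]
  have H2 : ∀ m, H (t + m) = lcs mul B m := by
    intro m
    simp [H]
  have key : ∀ j, ∀ b ∈ B, ∀ x ∈ H j, mul b x ∈ H (j + 1) ∧ mul x b ∈ H (j + 1) := by
    intro j b hb x hx
    by_cases h : j < t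
    · rw [H1 _ h.le] at hx
      rw [H1 _ h]
      have hi := hid (t - (j + 1)) (by omega)
      have e : t - (j + 1) + 1 = t - j := by omega
      rw [e] at hi
      exact (hi.2 x hx b (hBc _ (by omega) hb)).symm
    · obtain ⟨m, rfl⟩ := Nat.exists_eq_add_of_le (not_lt.mp h)
      rw [H2] at hx
      rw [Nat.add_assoc, H2]
      exact ⟨hL m b hb x hx, hR m b hb x hx⟩
  have hH0 : ∀ x, x ∈ H 0 := by
    intro x
    rw [H1 0 (Nat.zero_le _), Nat.sub_zero, ht]
    trivial
  have hl := fun j b hb x hx => (key j b hb x hx).1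
  have hr := fun j b hb x hx => (key j b hb x hx).2
  refine ⟨le_top, fun x _ y hy => ?_⟩
  have hy' : ∀ n, y ∈ lcs mul B n := (Submodule.mem_iInf _).1 hy
  have e : ∀ n, 0 + (t + n) + 1 = t + (n + 1) := by intro n; omega
  have hdec : ∀ n, lcs mul B (n + 1) ≤ lcs mul B n := by
    have hBs : IsSubalg mul B := h0 ▸ hsub 0 (Nat.zero_le _)
    intro n
    induction n with
    | zero =>
      refine Submodule.span_le.2 ?_
      rintro _ ⟨b, hb, z, hz, rfl⟩
      exact hBs b hb z hz
    | succ n ih =>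
      refine Submodule.span_le.2 ?_
      rintro _ ⟨b, hb, z, hz, rfl⟩
      exact hL n b hb z (ih hz)
  constructor
  · refine (Submodule.mem_iInf _).2 fun n => hdec n ?_
    have := aux_left mul hleib B H hl hr (t + n) 0 y (hy' _) x (hH0 x)
    rwa [e, H2] at this
  · refine (Submodule.mem_iInf _).2 fun n => hdec n ?_
    have := aux_right mul hleib B H hl (t + n) 0 y (hy' _) x (hH0 x)
    rwa [e, H2] at this
end

section
/- Let A be a finite-dimensional left Leibniz algebra over a field F and let B be a subinvariant subalgebra of A with B² = B (i.e., B·B = B). Then B is an ideal of A. -/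
open Submodule

/-- a subinvariant subalgebra `B` with `B² = B` is an ideal of `A`. -/
theorem stmt_3 {F A : Type*} [Field F] [AddCommGroup A] [Module F A] [FiniteDimensional F A]
    (mul : A →ₗ[F] A →ₗ[F] A)
    (hleib : ∀ x y z : A, mul x (mul y z) = mul (mul x y) z + mul y (mul x z))
    (B : Submodule F A) (hB : IsSubinvariantIn mul B ⊤)
    (hB2 : mulSub mul B B = B) :
    IsIdealIn mul B ⊤ := by
  obtain ⟨t, c, h0, ht, hs, hi⟩ := hB
  have key : ∀ i ≤ t, IsIdealIn mul B (c i) := by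
    intro i
    induction i with
    | zero =>
      intro _
      have h := hs 0 (Nat.zero_le _)
      rw [h0] at h ⊢
      exact ⟨le_refl _, fun x hx y hy => ⟨h x hx y hy, h y hy x hx⟩⟩
    | succ n ih =>
      intro hn
      obtain ⟨hBC, hid⟩ := ih (by omega)
      obtain ⟨hCD, hid2⟩ := hi n (by omega)
      refine ⟨hBC.trans hCD, fun x hx y hy => ?_⟩
      rw [← hB2] at hy
      unfold mulSub at hy
      induction hy using Submodule.span_induction with
      | mem z hz =>
        obtain ⟨b, hb, b', hb', rfl⟩ := hz
        have e1 := hleib x b b'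
        have e2 : mul (mul b b') x = mul b (mul b' x) - mul b' (mul b x) := by
          rw [hleib b b' x]; abel
        rw [e1, e2]
        exact ⟨B.add_mem (hid _ (hid2 x hx b (hBC hb)).1 b' hb').1
            (hid _ (hid2 x hx b' (hBC hb')).1 b hb).2,
          B.sub_mem (hid _ (hid2 x hx b' (hBC hb')).2 b hb).2
            (hid _ (hid2 x hx b (hBC hb)).2 b' hb').2⟩
      | zero => simp
      | add u v _ _ hu hv =>
        simp only [map_add, LinearMap.add_apply]
        exact ⟨B.add_mem hu.1 hv.1, B.add_mem hu.2 hv.2⟩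
      | smul a u _ hu =>
        simp only [map_smul, LinearMap.smul_apply]
        exact ⟨B.smul_mem _ hu.1, B.smul_mem _ hu.2⟩
  rw [← ht]
  exact key t le_rfl
end

section
/- Let A be a finite-dimensional left Leibniz algebra over a field F and let H be a Cartan subalgebra of A. Then A = A^ω + H, where A^ω = ⋂_{i≥1} A^i is the intersection of the lower central series of A. -/
open Submodule

attribute [local instance] LieRing.ofAssociativeRing

/-- The Lie algebra of left multiplications by elements of `H`. -/
def leftMulLie {F A : Type*} [Field F] [AddCommGroup A] [Module F A]
    (mul : A →ₗ[F] A →ₗ[F] A)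
    (hleib : ∀ x y z : A, mul x (mul y z) = mul (mul x y) z + mul y (mul x z))
    (H : Submodule F A) (hH : IsSubalg mul H) : LieSubalgebra F (Module.End F A) :=
  { (H.map mul : Submodule F (Module.End F A)) with
    lie_mem' := by
      rintro _ _ ⟨x, hx, rfl⟩ ⟨y, hy, rfl⟩
      refine ⟨mul x y, hH x hx y hy, ?_⟩
      ext z
      rw [Ring.lie_def]
      simp [hleib x y z] }

theorem pow_mul_mem_lcs {F A : Type*} [Field F] [AddCommGroup A] [Module F A]
    (mul : A →ₗ[F] A →ₗ[F] A) (H : Submodule F A) (h g : A) (hh : h ∈ H) (hg : g ∈ H) (n : ℕ) :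
    ((mul h : Module.End F A) ^ n) g ∈ lcs mul H n := by
  induction n with
  | zero => simpa [lcs] using hg
  | succ n ih =>
    rw [pow_succ']
    exact Submodule.subset_span ⟨h, hh, _, ih, rfl⟩

theorem exists_of_ucs {F A : Type*} [Field F] [AddCommGroup A] [Module F A]
    (mul : A →ₗ[F] A →ₗ[F] A) (H : Submodule F A)
    (c : ℕ → Set A) (hc0 : c 0 ⊆ {0}) (hc : ∀ n, ∀ x ∈ c (n + 1), ∀ h ∈ H, mul h x ∈ c n)
    (W : Set A) (hW : ∀ x ∈ W, ∀ h ∈ H, mul h x ∈ W) (n : ℕ) (x : A) (hx : x ∈ W) (hxH : x ∉ H)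
    (hxc : x ∈ c n) : ∃ z ∈ W, z ∉ H ∧ ∀ h ∈ H, mul h z ∈ H := by
  induction n generalizing x with
  | zero =>
    have := hc0 hxc
    rw [Set.mem_singleton_iff] at this
    exact absurd (this ▸ H.zero_mem) hxH
  | succ n ih =>
    by_cases hz : ∀ h ∈ H, mul h x ∈ H
    · exact ⟨x, hx, hxH, hz⟩
    · push Not at hz
      obtain ⟨h, hh, hhx⟩ := hz
      exact ih _ (hW x hx h hh) hhx (hc n x hxc h hh)

theorem zero_comp_le {F A : Type*} [Field F] [AddCommGroup A] [Module F A]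
    (mul : A →ₗ[F] A →ₗ[F] A)
    (hleib : ∀ x y z : A, mul x (mul y z) = mul (mul x y) z + mul y (mul x z))
    (H : Submodule F A) (hH : IsCartan mul H)
    (c : ℕ → Set A) (hc0 : c 0 ⊆ {0}) (hc : ∀ n, ∀ x ∈ c (n + 1), ∀ h ∈ H, mul h x ∈ c n)
    (A0 : Submodule F A) (n : ℕ) (hA0c : (A0 : Set A) ⊆ c n)
    (hA0 : ∀ x, x ∈ A0 ↔ ∀ h ∈ H, ∃ k : ℕ, ((mul h : Module.End F A) ^ k) x = 0)
    (hst : ∀ x ∈ A0, ∀ h ∈ H, mul h x ∈ A0) : A0 ≤ H := by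
  obtain ⟨hsub, ⟨m, hm⟩, hnorm⟩ := hH
  have hpow : ∀ h ∈ H, ∀ g ∈ H, ((mul h : Module.End F A) ^ m) g = 0 := by
    intro h hh g hg
    have := pow_mul_mem_lcs mul H h g hh hg m
    rwa [hm, Submodule.mem_bot] at this
  -- elements of `A0` which send `H` into `H` from the left lie in `H`
  have key : ∀ y ∈ A0, (∀ h ∈ H, mul y h ∈ H) → y ∈ H := by
    intro y hy hyH
    by_contra hcon
    obtain ⟨z, hzW, hzH, hz⟩ := exists_of_ucs mul H c hc0 hc
      {y | y ∈ A0 ∧ ∀ h ∈ H, mul y h ∈ H} (by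
        rintro x ⟨hx0, hx⟩ h hh
        refine ⟨hst x hx0 h hh, fun k hk => ?_⟩
        have e : mul (mul h x) k = mul h (mul x k) - mul x (mul h k) := by
          rw [hleib h x k]; abel
        rw [e]
        exact H.sub_mem (hsub _ hh _ (hx k hk)) (hx _ (hsub _ hh _ hk)))
      n y ⟨hy, hyH⟩ hcon (hA0c hy)
    exact hzH (hnorm z fun h hh => ⟨hzW.2 h hh, hz h hh⟩)
  intro x hx
  by_contra hcon
  obtain ⟨z, hz0, hzH, hz⟩ := exists_of_ucs mul H c hc0 hc A0 hst n x hx hcon (hA0c hx)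
  refine hzH (hnorm z fun h hh => ⟨?_, hz h hh⟩)
  have hzh0 : mul z h ∈ A0 := by
    rw [hA0]
    intro k hk
    have hmod : ∀ j : ℕ, ((mul k : Module.End F A) ^ j) (mul z h)
        - mul z (((mul k : Module.End F A) ^ j) h) ∈ H := by
      intro j
      induction j with
      | zero => simp
      | succ j ih =>
        have hjH : ∀ j : ℕ, ((mul k : Module.End F A) ^ j) h ∈ H := by
          intro j
          induction j with
          | zero => simpa using hh
          | succ j ih => rw [pow_succ']; exact hsub _ hk _ ih
        have e : ((mul k : Module.End F A) ^ (j + 1)) (mul z h)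
            - mul z (((mul k : Module.End F A) ^ (j + 1)) h) =
            mul k (((mul k : Module.End F A) ^ j) (mul z h)
              - mul z (((mul k : Module.End F A) ^ j) h))
            + mul (mul k z) (((mul k : Module.End F A) ^ j) h) := by
          simp only [pow_succ', Module.End.mul_apply, map_sub]
          rw [hleib k z]
          abel
        rw [e]
        exact H.add_mem (hsub _ hk _ ih) (hsub _ (hz k hk) _ (hjH j))
    have h1 := hmod m
    rw [hpow k hk h hh, map_zero, sub_zero] at h1
    refine ⟨m + m, ?_⟩
    rw [pow_add]
    exact hpow k hk _ h1
  have hy : mul z h + mul h z ∈ H := by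
    refine key _ (A0.add_mem hzh0 (hst z hz0 h hh)) fun k hk => ?_
    have e : mul (mul z h + mul h z) k = 0 := by
      rw [map_add, LinearMap.add_apply]
      have e1 := hleib z h k
      have e2 := hleib h z k
      rw [← sub_eq_iff_eq_add] at e1 e2
      rw [← e1, ← e2]
      abel
    rw [e]; exact H.zero_mem
  simpa using H.sub_mem hy (hz h hh)

/-- if `H` is a Cartan subalgebra of `A`, then `A = A^ω + H`. -/
theorem stmt_4 {F A : Type*} [Field F] [AddCommGroup A] [Module F A] [FiniteDimensional F A]
    (mul : A →ₗ[F] A →ₗ[F] A)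
    (hleib : ∀ x y z : A, mul x (mul y z) = mul (mul x y) z + mul y (mul x z))
    (H : Submodule F A) (hH : IsCartan mul H) :
    omegaSub mul (⊤ : Submodule F A) ⊔ H = ⊤ := by
  have hlcs : ∃ m, lcs mul H m = ⊥ := hH.2.1
  obtain ⟨m, hm⟩ := hlcs
  have hpow : ∀ h ∈ H, ∀ g ∈ H, ((mul h : Module.End F A) ^ m) g = 0 := by
    intro h hh g hg
    have := pow_mul_mem_lcs mul H h g hh hg m
    rwa [hm, Submodule.mem_bot] at this
  let L := leftMulLie mul hleib H hH.1
  have hmem : ∀ h ∈ H, (mul h : Module.End F A) ∈ L := fun h hh => ⟨h, hh, rfl⟩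
  have hLnil : LieRing.IsNilpotent L := by
    rw [LieAlgebra.isNilpotent_iff_forall (R := F)]
    rintro ⟨_, h, hh, rfl⟩
    refine ⟨m, ?_⟩
    ext1 ⟨_, g, hg, rfl⟩
    have : ∀ j : ℕ, (((LieAlgebra.ad F L ⟨mul h, hmem h hh⟩) ^ j) ⟨mul g, hmem g hg⟩ : L).1
        = mul (((mul h : Module.End F A) ^ j) g) := by
      intro j
      induction j with
      | zero => simp
      | succ j ih =>
        rw [pow_succ', pow_succ', Module.End.mul_apply, Module.End.mul_apply,
          LieAlgebra.ad_apply, LieSubalgebra.coe_bracket, ih]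
        ext z
        rw [Ring.lie_def]
        simp [hleib h _ z]
    apply Subtype.ext
    refine (this m).trans ?_
    rw [hpow h hh g hg]
    simp
  have hcompl := LieModule.isCompl_genWeightSpace_zero_posFittingComp F L A
  have hsup := hcompl.sup_eq_top
  rw [← LieSubmodule.toSubmodule_inj, LieSubmodule.sup_toSubmodule] at hsup
  have h1 : (LieModule.posFittingComp F L A : Submodule F A) ≤ omegaSub mul ⊤ := by
    refine le_iInf fun k => ?_
    have h2 : LieModule.posFittingComp F L A ≤ LieModule.lowerCentralSeries F L A k :=
      (LieModule.posFittingComp_le_iInf_lowerCentralSeries F L A).trans (iInf_le _ k)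
    refine le_trans (LieSubmodule.toSubmodule_le_toSubmodule _ _ |>.mpr h2) ?_
    clear h2
    induction k with
    | zero => exact le_top
    | succ k ih =>
      rw [LieModule.lowerCentralSeries_succ, LieSubmodule.lieIdeal_oper_eq_linear_span']
      refine Submodule.span_le.mpr ?_
      rintro _ ⟨⟨_, h, hh, rfl⟩, -, a, ha, rfl⟩
      exact Submodule.subset_span ⟨h, trivial, a, ih ha, rfl⟩
  have h0 : (LieModule.genWeightSpace A (0 : L → F) : Submodule F A) ≤ H := by
    obtain ⟨n, hn⟩ := (LieSubmodule.isNilpotent_iff_exists_self_le_ucs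
      (LieModule.genWeightSpace A (0 : L → F))).mp inferInstance
    refine zero_comp_le mul hleib H hH
      (fun k => ((⊥ : LieSubmodule F L A).ucs k : Set A)) ?_ ?_ _ n hn ?_ ?_
    · intro x hx
      simpa using hx
    · intro k x hx h hh
      simp only [LieSubmodule.ucs_succ] at hx
      exact (LieSubmodule.mem_normalizer _ _).mp hx ⟨mul h, hmem h hh⟩
    · intro x
      rw [LieSubmodule.mem_toSubmodule, LieModule.mem_genWeightSpace]
      constructor
      · intro hx h hh
        obtain ⟨k, hk⟩ := hx ⟨mul h, hmem h hh⟩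
        refine ⟨k, ?_⟩
        simp only [Pi.zero_apply, zero_smul, sub_zero] at hk
        exact hk
      · rintro hx ⟨_, h, hh, rfl⟩
        obtain ⟨k, hk⟩ := hx h hh
        refine ⟨k, ?_⟩
        simp only [Pi.zero_apply, zero_smul, sub_zero]
        exact hk
    · intro x hx h hh
      exact LieSubmodule.lie_mem _ (x := (⟨mul h, hmem h hh⟩ : L)) hx
  rw [eq_top_iff]
  calc (⊤ : Submodule F A) = _ := hsup.symm
    _ ≤ _ := sup_le (h0.trans le_sup_right) (h1.trans le_sup_left)
end

section
/- Let A be a nilpotent finite-dimensional left Leibniz algebra over a field F and let B be a nonzero ideal of A. Then B ∩ Z(A) ≠ {0}, where Z(A) is the center of A. -/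
open Submodule

theorem lcs_mul_mem {F A : Type*} [Field F] [AddCommGroup A] [Module F A]
    (mul : A →ₗ[F] A →ₗ[F] A)
    (hleib : ∀ x y z : A, mul x (mul y z) = mul (mul x y) z + mul y (mul x z)) (i : ℕ) :
    ∀ j : ℕ, ∀ x ∈ lcs mul (⊤ : Submodule F A) i, ∀ y ∈ lcs mul (⊤ : Submodule F A) j,
      mul x y ∈ lcs mul (⊤ : Submodule F A) (i + j + 1) := by
  have step : ∀ (k : ℕ) (a y : A), y ∈ lcs mul (⊤ : Submodule F A) k →
      mul a y ∈ lcs mul (⊤ : Submodule F A) (k + 1) := fun k a y hy =>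
    Submodule.subset_span ⟨a, Submodule.mem_top, y, hy, rfl⟩
  induction i with
  | zero =>
    intro j x _ y hy
    rw [Nat.zero_add]
    exact step j x y hy
  | succ i ih =>
    intro j x hx z hz
    change x ∈ Submodule.span F _ at hx
    induction hx using Submodule.span_induction with
    | mem w hw =>
      obtain ⟨b, _, c, hc, rfl⟩ := hw
      have e : mul (mul b c) z = mul b (mul c z) - mul c (mul b z) := by
        rw [hleib b c z]; abel
      rw [e]
      have h1 := step _ b _ (ih j c hc z hz)
      have h2 := ih (j + 1) c hc _ (step j b z hz)
      have e1 : i + 1 + j + 1 = i + j + 1 + 1 := by omega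
      have e2 : i + (j + 1) + 1 = i + j + 1 + 1 := by omega
      rw [e2] at h2
      rw [e1]
      exact Submodule.sub_mem _ h1 h2
    | zero => simp
    | add u v _ _ hu hv =>
      rw [map_add, LinearMap.add_apply]
      exact Submodule.add_mem _ hu hv
    | smul r u _ hu =>
      rw [map_smul, LinearMap.smul_apply]
      exact Submodule.smul_mem _ r hu

/-- a nonzero ideal of a nilpotent Leibniz algebra meets the center
nontrivially. -/
theorem stmt_5 {F A : Type*} [Field F] [AddCommGroup A] [Module F A] [FiniteDimensional F A]
    (mul : A →ₗ[F] A →ₗ[F] A)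
    (hleib : ∀ x y z : A, mul x (mul y z) = mul (mul x y) z + mul y (mul x z))
    (hnil : IsNilpotentSub mul (⊤ : Submodule F A))
    (B : Submodule F A) (hB : IsIdealIn mul B ⊤) (hBne : B ≠ ⊥) :
    ∃ x ∈ B, x ≠ 0 ∧ ∀ a : A, mul x a = 0 ∧ mul a x = 0 := by
  by_contra hcon
  have key : ∀ n : ℕ, ∃ x ∈ B, x ≠ 0 ∧ x ∈ lcs mul (⊤ : Submodule F A) n := by
    intro n
    induction n with
    | zero =>
      obtain ⟨x, hx, hx0⟩ := Submodule.exists_mem_ne_zero_of_ne_bot hBne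
      exact ⟨x, hx, hx0, Submodule.mem_top⟩
    | succ n ih =>
      obtain ⟨x, hx, hx0, hxn⟩ := ih
      have hnc : ¬ ∀ a : A, mul x a = 0 ∧ mul a x = 0 := fun h => hcon ⟨x, hx, hx0, h⟩
      obtain ⟨a, ha⟩ := not_forall.mp hnc
      have hI := hB.2 a Submodule.mem_top x hx
      by_cases h1 : mul x a = 0
      · refine ⟨mul a x, hI.1, fun h2 => ha ⟨h1, h2⟩, ?_⟩
        exact Submodule.subset_span ⟨a, Submodule.mem_top, x, hxn, rfl⟩
      · exact ⟨mul x a, hI.2, h1, lcs_mul_mem mul hleib n 0 x hxn a Submodule.mem_top⟩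
  obtain ⟨m, hm⟩ := hnil
  obtain ⟨x, _, hx0, hxm⟩ := key m
  rw [hm] at hxm
  exact hx0 ((Submodule.mem_bot F).mp hxm)
end

section
/- Let A be a finite-dimensional left Leibniz algebra over a field F. If the centralizer Z_A(A^ω) is not contained in A^ω, then the center Z(A) ≠ {0}. -/
open Submodule

section LeibnizAux

attribute [local instance] LieRing.ofAssociativeRing

variable {F : Type*} {A : Type*} [Field F] [AddCommGroup A] [Module F A]

theorem aux_mem_lcs_succ (mul : A →ₗ[F] A →ₗ[F] A) (n : ℕ) (x y : A)
    (hy : y ∈ lcs mul ⊤ n) : mul x y ∈ lcs mul ⊤ (n + 1) :=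
  Submodule.subset_span ⟨x, trivial, y, hy, rfl⟩

theorem aux_lcs_anti (mul : A →ₗ[F] A →ₗ[F] A) (n : ℕ) :
    lcs mul ⊤ (n + 1) ≤ lcs mul ⊤ n := by
  induction n with
  | zero => exact le_top
  | succ n ih =>
    refine Submodule.span_le.mpr ?_
    rintro _ ⟨b, -, c, hc, rfl⟩
    exact aux_mem_lcs_succ mul n b c (ih hc)

theorem aux_lcs_mul (mul : A →ₗ[F] A →ₗ[F] A)
    (hleib : ∀ x y z : A, mul x (mul y z) = mul (mul x y) z + mul y (mul x z)) (n : ℕ) :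
    ∀ m : ℕ, ∀ y ∈ lcs mul ⊤ n, ∀ z ∈ lcs mul ⊤ m, mul y z ∈ lcs mul ⊤ (n + m + 1) := by
  induction n with
  | zero =>
    intro m y _ z hz
    rw [Nat.zero_add]
    exact aux_mem_lcs_succ mul m y z hz
  | succ n ih =>
    intro m y hy z hz
    have hle : lcs mul ⊤ (n + 1) ≤ (lcs mul ⊤ (n + 1 + m + 1)).comap (mul.flip z) := by
      refine Submodule.span_le.mpr ?_
      rintro _ ⟨b, -, c, hc, rfl⟩
      change mul (mul b c) z ∈ lcs mul ⊤ (n + 1 + m + 1)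
      have e : mul (mul b c) z = mul b (mul c z) - mul c (mul b z) := by
        rw [hleib b c z]; abel
      rw [e]
      refine Submodule.sub_mem _ ?_ ?_
      · have := aux_mem_lcs_succ mul _ b _ (ih m c hc z hz)
        rwa [show n + 1 + m + 1 = n + m + 1 + 1 by omega]
      · have := ih (m + 1) c hc _ (aux_mem_lcs_succ mul _ b _ hz)
        rwa [show n + 1 + m + 1 = n + (m + 1) + 1 by omega]
    exact hle hy

/-- Left multiplication operators restricted to a left-stable subspace. -/
def auxRho (mul : A →ₗ[F] A →ₗ[F] A) (C : Submodule F A)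
    (hC : ∀ x : A, ∀ c ∈ C, mul x c ∈ C) : A →ₗ[F] Module.End F C where
  toFun x := (mul x).restrict (hC x)
  map_add' x y := by ext c; simp
  map_smul' r x := by ext c; simp

theorem auxRho_apply (mul : A →ₗ[F] A →ₗ[F] A) (C : Submodule F A)
    (hC : ∀ x : A, ∀ c ∈ C, mul x c ∈ C) (x : A) (c : C) :
    ((auxRho mul C hC x c : C) : A) = mul x c := rfl

theorem auxRho_lie (mul : A →ₗ[F] A →ₗ[F] A)
    (hleib : ∀ x y z : A, mul x (mul y z) = mul (mul x y) z + mul y (mul x z))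
    (C : Submodule F A) (hC : ∀ x : A, ∀ c ∈ C, mul x c ∈ C) (x y : A) :
    ⁅auxRho mul C hC x, auxRho mul C hC y⁆ = auxRho mul C hC (mul x y) := by
  ext c
  rw [Ring.lie_def]
  simp only [LinearMap.sub_apply, Module.End.mul_apply, Submodule.coe_sub, auxRho_apply]
  rw [hleib x y c]; abel

/-- The Lie algebra of left multiplications on `C`. -/
def auxL (mul : A →ₗ[F] A →ₗ[F] A)
    (hleib : ∀ x y z : A, mul x (mul y z) = mul (mul x y) z + mul y (mul x z))
    (C : Submodule F A) (hC : ∀ x : A, ∀ c ∈ C, mul x c ∈ C) :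
    LieSubalgebra F (Module.End F C) :=
  { LinearMap.range (auxRho mul C hC) with
    lie_mem' := by
      rintro _ _ ⟨x, rfl⟩ ⟨y, rfl⟩
      exact ⟨mul x y, (auxRho_lie mul hleib C hC x y).symm⟩ }

theorem aux_lower_L (mul : A →ₗ[F] A →ₗ[F] A)
    (hleib : ∀ x y z : A, mul x (mul y z) = mul (mul x y) z + mul y (mul x z))
    (C : Submodule F A) (hC : ∀ x : A, ∀ c ∈ C, mul x c ∈ C) (n : ℕ) :
    ∀ l ∈ LieModule.lowerCentralSeries F (auxL mul hleib C hC) (auxL mul hleib C hC) n,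
      ∃ a ∈ lcs mul ⊤ n, auxRho mul C hC a = (l : Module.End F C) := by
  induction n with
  | zero =>
    rintro ⟨_, ⟨a, rfl⟩⟩ _
    exact ⟨a, trivial, rfl⟩
  | succ n ih =>
    intro l hl
    rw [LieModule.lowerCentralSeries_succ, ← LieSubmodule.mem_toSubmodule,
      LieSubmodule.lieIdeal_oper_eq_linear_span'] at hl
    induction hl using Submodule.span_induction with
    | mem l h =>
      obtain ⟨⟨_, ⟨x, rfl⟩⟩, -, m, hm, rfl⟩ := h
      obtain ⟨a, ha, e⟩ := ih m hm
      refine ⟨mul x a, aux_mem_lcs_succ mul n x a ha, ?_⟩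
      rw [← auxRho_lie mul hleib, e]
      rfl
    | zero => exact ⟨0, Submodule.zero_mem _, by simp⟩
    | add x y _ _ hx hy =>
      obtain ⟨a, ha, e⟩ := hx
      obtain ⟨b, hb, e'⟩ := hy
      exact ⟨a + b, Submodule.add_mem _ ha hb, by simp [e, e']⟩
    | smul r x _ hx =>
      obtain ⟨a, ha, e⟩ := hx
      exact ⟨r • a, Submodule.smul_mem _ r ha, by simp [e]⟩

theorem aux_lower_C (mul : A →ₗ[F] A →ₗ[F] A)
    (hleib : ∀ x y z : A, mul x (mul y z) = mul (mul x y) z + mul y (mul x z))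
    (C : Submodule F A) (hC : ∀ x : A, ∀ c ∈ C, mul x c ∈ C) (n : ℕ) :
    ∀ c ∈ LieModule.lowerCentralSeries F (auxL mul hleib C hC) C n,
      (c : A) ∈ lcs mul ⊤ n := by
  induction n with
  | zero => intro c _; trivial
  | succ n ih =>
    intro l hl
    rw [LieModule.lowerCentralSeries_succ, ← LieSubmodule.mem_toSubmodule,
      LieSubmodule.lieIdeal_oper_eq_linear_span'] at hl
    induction hl using Submodule.span_induction with
    | mem l h =>
      obtain ⟨⟨_, ⟨x, rfl⟩⟩, -, m, hm, rfl⟩ := h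
      exact aux_mem_lcs_succ mul n x m (ih m hm)
    | zero => exact Submodule.zero_mem _
    | add x y _ _ hx hy => exact Submodule.add_mem _ hx hy
    | smul r x _ hx => exact Submodule.smul_mem _ r hx

theorem aux_exists_left_null [FiniteDimensional F A] (mul : A →ₗ[F] A →ₗ[F] A)
    (hleib : ∀ x y z : A, mul x (mul y z) = mul (mul x y) z + mul y (mul x z))
    (C : Submodule F A) (hC : ∀ x : A, ∀ c ∈ C, mul x c ∈ C) (n : ℕ)
    (hkill : ∀ a ∈ lcs mul ⊤ n, ∀ c ∈ C, mul a c = 0)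
    (hn : ¬ C ≤ omegaSub mul ⊤) :
    ∃ c ∈ C, c ≠ 0 ∧ ∀ a, mul a c = 0 := by
  have hnil : LieRing.IsNilpotent (auxL mul hleib C hC) := by
    refine (LieModule.isNilpotent_iff F (auxL mul hleib C hC) (auxL mul hleib C hC)).mpr ⟨n, ?_⟩
    rw [eq_bot_iff]
    intro l hl
    obtain ⟨a, ha, e⟩ := aux_lower_L mul hleib C hC n l hl
    rw [LieSubmodule.mem_bot]
    apply Subtype.ext
    rw [← e]
    ext c
    exact hkill a ha c c.2
  have hcompl := LieModule.isCompl_genWeightSpace_zero_posFittingComp F (auxL mul hleib C hC) C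
  have hne : LieModule.genWeightSpace C (0 : auxL mul hleib C hC → F) ≠ ⊥ := by
    intro h0
    rw [h0] at hcompl
    have htop := eq_top_of_bot_isCompl hcompl
    apply hn
    intro c hc
    refine (Submodule.mem_iInf _).mpr fun k => ?_
    refine aux_lower_C mul hleib C hC k ⟨c, hc⟩ ?_
    have h1 := LieModule.posFittingComp_le_iInf_lowerCentralSeries F (auxL mul hleib C hC) C
    rw [htop] at h1
    exact (h1.trans (iInf_le _ k)) trivial
  have : Nontrivial (LieModule.genWeightSpace C (0 : auxL mul hleib C hC → F)) :=
    (LieSubmodule.nontrivial_iff_ne_bot F _ _).mpr hne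
  obtain ⟨m, hm⟩ := @exists_ne _ (LieModule.nontrivial_max_triv_of_isNilpotent F
    (auxL mul hleib C hC) (LieModule.genWeightSpace C (0 : auxL mul hleib C hC → F))) 0
  refine ⟨((m.1 : C) : A), (m.1 : C).2, ?_, ?_⟩
  · intro h0
    apply hm
    apply Subtype.ext
    apply Subtype.ext
    apply Subtype.ext
    exact h0
  · intro a
    have h1 := (LieModule.mem_maxTrivSubmodule F (auxL mul hleib C hC) _ m.1).mp m.2
      ⟨auxRho mul C hC a, ⟨a, rfl⟩⟩
    exact congrArg Subtype.val (congrArg Subtype.val h1)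

end LeibnizAux

/-- if `Z_A(A^ω)` is not contained in `A^ω`, then `Z(A) ≠ 0`. -/
theorem stmt_6 {F A : Type*} [Field F] [AddCommGroup A] [Module F A] [FiniteDimensional F A]
    (mul : A →ₗ[F] A →ₗ[F] A)
    (hleib : ∀ x y z : A, mul x (mul y z) = mul (mul x y) z + mul y (mul x z))
    (h : ¬ centralizerSet mul (omegaSub mul (⊤ : Submodule F A)) ⊆
        (omegaSub mul (⊤ : Submodule F A) : Set A)) :
    ∃ x : A, x ≠ 0 ∧ ∀ a : A, mul x a = 0 ∧ mul a x = 0 := by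
  obtain ⟨n, hn⟩ := IsArtinian.monotone_stabilizes (R := F) (M := A)
    ⟨fun n => OrderDual.toDual (lcs mul ⊤ n), monotone_nat_of_le_succ (aux_lcs_anti mul)⟩
  replace hn : ∀ m, n ≤ m → lcs mul ⊤ n = lcs mul ⊤ m := hn
  have hle : lcs mul ⊤ n ≤ omegaSub mul ⊤ := by
    refine le_iInf fun k => ?_
    rcases le_total n k with hk | hk
    · exact (hn k hk).le
    · exact antitone_nat_of_succ_le (aux_lcs_anti mul) hk
  have hW : omegaSub mul ⊤ = lcs mul ⊤ n := le_antisymm (iInf_le _ n) hle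
  have hl : ∀ x, ∀ w ∈ lcs mul ⊤ n, mul x w ∈ lcs mul ⊤ n := fun x w hw =>
    aux_lcs_anti mul n (aux_mem_lcs_succ mul n x w hw)
  have hr : ∀ x, ∀ w ∈ lcs mul ⊤ n, mul w x ∈ lcs mul ⊤ n := fun x w hw =>
    aux_lcs_anti mul n (aux_lcs_mul mul hleib n 0 w hw x trivial)
  let C : Submodule F A :=
    { carrier := centralizerSet mul (omegaSub mul ⊤)
      zero_mem' := fun b _ => by simp
      add_mem' := fun {x y} hx hy b hb => by
        simp [(hx b hb).1, (hx b hb).2, (hy b hb).1, (hy b hb).2]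
      smul_mem' := fun r x hx b hb => by simp [(hx b hb).1, (hx b hb).2] }
  have hCm : ∀ c ∈ C, ∀ w ∈ lcs mul ⊤ n, mul c w = 0 ∧ mul w c = 0 := fun c hc w hw =>
    hc w (hle hw)
  have hC : ∀ x : A, ∀ c ∈ C, mul x c ∈ C := by
    intro x c hc w hw
    rw [hW] at hw
    have h1 := hleib x c w
    have h2 := hleib w x c
    rw [(hCm c hc w hw).1, (hCm c hc _ (hl x w hw)).1, map_zero, add_zero] at h1
    rw [(hCm c hc w hw).2, (hCm c hc _ (hr x w hw)).2, map_zero, add_zero] at h2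
    exact ⟨h1.symm, h2⟩
  obtain ⟨c, hc, hc0, hac⟩ := aux_exists_left_null mul hleib C hC n
    (fun a ha c hc => (hCm c hc a ha).2) h
  -- the least `k` with `c * A^(k+1) = 0`
  classical
  have hex : ∃ k, ∀ a ∈ lcs mul ⊤ k, mul c a = 0 := ⟨n, fun a ha => (hCm c hc a ha).1⟩
  have hk := Nat.find_spec hex
  have hmin := fun m => Nat.find_min hex (m := m)
  generalize Nat.find hex = k at hk hmin
  rcases k with _ | k
  · exact ⟨c, hc0, fun a => ⟨hk a trivial, hac a⟩⟩
  · have := hmin k (Nat.lt_succ_self k)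
    push Not at this
    obtain ⟨a, ha, hca⟩ := this
    refine ⟨mul c a, hca, fun b => ⟨?_, ?_⟩⟩
    · have h1 := hleib a c b
      have h2 := hleib c a b
      rw [hac a, map_zero, LinearMap.zero_apply, zero_add] at h1
      rw [h1] at h2
      exact right_eq_add.mp h2
    · rw [hleib b c a, hac b, map_zero, LinearMap.zero_apply, zero_add]
      exact hk _ (aux_mem_lcs_succ mul k b a ha)
end

section
/- Let A be a finite-dimensional left Leibniz algebra over a field F and let B be a subinvariant subalgebra of A with Z_A(B) = {0}. Then Z_A(B^ω) ⊆ B^ω, where B^ω = ⋂_{i≥1} B^i. -/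
open Submodule

theorem hh_fitting {K L M : Type*} [Field K] [LieRing L] [LieAlgebra K L] [AddCommGroup M]
    [Module K M] [LieRingModule L M] [LieModule K L M] [LieRing.IsNilpotent L]
    [FiniteDimensional K M] (h : ∀ m : M, (∀ x : L, ⁅x, m⁆ = 0) → m = 0) :
    ⁅(⊤ : LieIdeal K L), (⊤ : LieSubmodule K L M)⁆ = ⊤ := by
  have hc := LieModule.isCompl_genWeightSpace_zero_posFittingComp K L M
  have h0 : LieModule.genWeightSpace M (0 : L → K) = ⊥ := by
    by_contra hne
    have : Nontrivial (LieModule.genWeightSpace M (0 : L → K)) :=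
      (LieSubmodule.nontrivial_iff_ne_bot K L M).mpr hne
    obtain ⟨m, hm⟩ := @exists_ne _ (LieModule.nontrivial_max_triv_of_isNilpotent K L
      (LieModule.genWeightSpace M (0 : L → K))) 0
    apply hm
    have hm2 := (LieModule.mem_maxTrivSubmodule (R := K) (L := L) _ m.1).mp m.2
    apply Subtype.ext
    apply Subtype.ext
    apply h
    intro x
    exact congrArg Subtype.val (hm2 x)
  rw [h0] at hc
  have h1 : LieModule.posFittingComp K L M = ⊤ := by
    simpa using hc.sup_eq_top
  have h2 := LieModule.posFittingComp_le_iInf_lowerCentralSeries K L M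
  rw [h1] at h2
  have h3 := h2.trans (iInf_le _ 1)
  exact top_le_iff.mp h3

section HH
attribute [local instance] LieRing.ofAssociativeRing
variable {F A : Type*} [Field F] [AddCommGroup A] [Module F A]
  {mul : A →ₗ[F] A →ₗ[F] A}

theorem hh_mem {B C : Submodule F A} {b c : A} (hb : b ∈ B) (hc : c ∈ C) :
    mul b c ∈ mulSub mul B C := Submodule.subset_span ⟨b, hb, c, hc, rfl⟩

theorem hh_le {B C D : Submodule F A} (h : ∀ b ∈ B, ∀ c ∈ C, mul b c ∈ D) :
    mulSub mul B C ≤ D := by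
  refine Submodule.span_le.mpr ?_
  rintro _ ⟨b, hb, c, hc, rfl⟩
  exact h b hb c hc

/-- products of lower central terms -/
theorem hh_lcs_mul (hleib : ∀ x y z : A, mul x (mul y z) = mul (mul x y) z + mul y (mul x z))
    (B : Submodule F A) (i : ℕ) : ∀ j, ∀ x ∈ lcs mul B i, ∀ y ∈ lcs mul B j,
      mul x y ∈ lcs mul B (i + j + 1) := by
  induction i with
  | zero =>
    intro j x hx y hy
    rw [Nat.zero_add]
    exact hh_mem hx hy
  | succ i ih =>
    intro j x hx y hy
    have : lcs mul B (i + 1) ≤ (lcs mul B (i + 1 + j + 1)).comap (mul.flip y) := by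
      refine hh_le fun b hb c hc => ?_
      have e : mul (mul b c) y = mul b (mul c y) - mul c (mul b y) := by
        rw [hleib b c y]; abel
      change mul (mul b c) y ∈ lcs mul B (i + 1 + j + 1)
      rw [e]
      refine sub_mem ?_ ?_
      · have := ih j c hc y hy
        rw [show i + 1 + j = i + j + 1 by omega]
        exact hh_mem hb this
      · have h1 : mul b y ∈ lcs mul B (j + 1) := hh_mem hb hy
        have := ih (j + 1) c hc _ h1
        rwa [show i + 1 + j + 1 = i + (j + 1) + 1 by omega]
    exact this hx

theorem hh_anti (B : Submodule F A) (hB : IsSubalg mul B) : Antitone (lcs mul B) := by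
  refine antitone_nat_of_succ_le fun n => ?_
  induction n with
  | zero => exact hh_le (D := B) hB
  | succ n ih => exact hh_le fun b hb c hc => hh_mem hb (show c ∈ lcs mul B n from ih hc)

theorem hh_stab [FiniteDimensional F A] (B : Submodule F A) (hB : IsSubalg mul B) :
    ∃ n, ∀ m, n ≤ m → lcs mul B m = omegaSub mul B := by
  obtain ⟨n, hn⟩ := IsArtinian.monotone_stabilizes (R := F) (M := A)
    ⟨fun n => OrderDual.toDual (lcs mul B n), fun a b h => hh_anti B hB h⟩
  have hn' : ∀ m, n ≤ m → lcs mul B n = lcs mul B m := hn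
  have key : lcs mul B n = omegaSub mul B := by
    refine le_antisymm (le_iInf fun m => ?_) (iInf_le _ n)
    rcases le_total n m with h | h
    · exact (hn' m h).le
    · exact hh_anti B hB h
  exact ⟨n, fun m hm => (hn' m hm).symm.trans key⟩

/-- `B^ω` is an ideal. -/
theorem hh_ideal [FiniteDimensional F A]
    (hleib : ∀ x y z : A, mul x (mul y z) = mul (mul x y) z + mul y (mul x z))
    (B : Submodule F A) (hB : IsSubinvariantIn mul B ⊤) :
    ∀ x, ∀ w ∈ omegaSub mul B, mul x w ∈ omegaSub mul B ∧ mul w x ∈ omegaSub mul B := by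
  obtain ⟨t, c, h0, ht, hs, hi⟩ := hB
  have hBs : IsSubalg mul B := h0 ▸ hs 0 (Nat.zero_le t)
  obtain ⟨n, hn⟩ := hh_stab B hBs
  set W := omegaSub mul B with hW
  have hWn : ∀ m, W ≤ lcs mul B m := fun m => iInf_le _ m
  have hWB : W ≤ B := hWn 0
  have hBW : mulSub mul B W = W := by
    rw [← hn n le_rfl]
    exact (hn (n+1) (by omega)).trans (hn n le_rfl).symm
  have hBc : ∀ i ≤ t, B ≤ c i := by
    intro i
    induction i with
    | zero => intro _; rw [h0]
    | succ i ih => intro h; exact (ih (by omega)).trans (hi i (by omega)).1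
  have main : ∀ i ≤ t, ∀ x ∈ c i, ∀ w ∈ W, mul x w ∈ W ∧ mul w x ∈ W := by
    intro i
    induction i with
    | zero =>
      intro _ x hx w hw
      rw [h0] at hx
      refine ⟨hBW ▸ hh_mem hx hw, ?_⟩
      have := hh_lcs_mul hleib B n 0 w (hWn n hw) x hx
      rwa [hn _ (by omega)] at this
    | succ i ih =>
      intro hit
      have ih := ih (by omega)
      have hid := hi i (by omega)
      -- the bootstrapping step
      have step : ∀ U V : Submodule F A, W ≤ V → (∀ b ∈ B, ∀ u ∈ U, mul b u ∈ V) →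
          (∀ x ∈ c (i+1), ∀ w ∈ W, mul x w ∈ U ∧ mul w x ∈ U) →
          (∀ x ∈ c (i+1), ∀ w ∈ W, mul x w ∈ V ∧ mul w x ∈ V) := by
        intro U V hWV hBU hP x hx w hw
        have : W ≤ V.comap (mul x) ⊓ V.comap (mul.flip x) := by
          rw [← hBW]
          refine hh_le fun b hb w hw => ?_
          have hb' := hBc i (by omega) hb
          have e : mul (mul b w) x = mul b (mul w x) - mul w (mul b x) := by
            rw [hleib b w x]; abel
          constructor
          · change mul x (mul b w) ∈ V
            rw [hleib]
            exact add_mem (hWV (ih _ (hid.2 x hx b hb').1 w hw).1) (hBU b hb _ (hP x hx w hw).1)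
          · change mul (mul b w) x ∈ V
            rw [e]
            exact sub_mem (hBU b hb _ (hP x hx w hw).2) (hWV (ih _ (hid.2 x hx b hb').2 w hw).2)
        exact this hw
      have down : ∀ k ≤ i, ∀ x ∈ c (i+1), ∀ w ∈ W, mul x w ∈ c (i-k) ∧ mul w x ∈ c (i-k) := by
        intro k
        induction k with
        | zero =>
          intro _ x hx w hw
          exact hid.2 x hx w (hBc i (by omega) (hWB hw))
        | succ k ihk =>
          intro hk
          refine step (c (i-k)) _ (hWB.trans (hBc _ (by omega))) ?_ (ihk (by omega))
          intro b hb u hu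
          have := (hi (i-(k+1)) (by omega)).2 u (by
            rwa [show i-(k+1)+1 = i-k by omega]) b (hBc _ (by omega) hb)
          exact this.2
      have low : ∀ m, ∀ x ∈ c (i+1), ∀ w ∈ W, mul x w ∈ lcs mul B m ∧ mul w x ∈ lcs mul B m := by
        intro m
        induction m with
        | zero =>
          have := down i le_rfl
          rw [Nat.sub_self, h0] at this
          exact this
        | succ m ihm => exact step _ _ (hWn _) (fun b hb u hu => hh_mem hb hu) ihm
      intro x hx w hw
      rw [← hn n le_rfl]
      exact low n x hx w hw
  intro x w hw
  exact main t le_rfl x (by rw [ht]; trivial) w hw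

/-- A space on which `B` acts through a nilpotent quotient without invariants is equal to `B·Z`. -/
theorem hh_fit_sub [FiniteDimensional F A]
    (hleib : ∀ x y z : A, mul x (mul y z) = mul (mul x y) z + mul y (mul x z))
    (B Z : Submodule F A) (hB : IsSubalg mul B)
    (hZ : ∀ b ∈ B, ∀ z ∈ Z, mul b z ∈ Z) (n : ℕ)
    (hn : ∀ b ∈ lcs mul B n, ∀ z ∈ Z, mul b z = 0)
    (hinv : ∀ z ∈ Z, (∀ b ∈ B, mul b z = 0) → z = 0) : Z ≤ mulSub mul B Z := by
  let N : LieSubalgebra F (Module.End F Z) :=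
    { carrier := {f | ∃ b ∈ B, ∀ z : Z, (f z : A) = mul b z}
      add_mem' := by
        rintro f g ⟨b, hb, hf⟩ ⟨c, hc, hg⟩
        exact ⟨b + c, add_mem hb hc, fun z => by simp [hf, hg]⟩
      zero_mem' := ⟨0, zero_mem _, fun z => by simp⟩
      smul_mem' := by
        rintro r f ⟨b, hb, hf⟩
        exact ⟨r • b, B.smul_mem r hb, fun z => by simp [hf]⟩
      lie_mem' := by
        rintro f g ⟨b, hb, hf⟩ ⟨c, hc, hg⟩
        refine ⟨mul b c, hB b hb c hc, fun z => ?_⟩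
        have := hleib b c z
        simp [LieRing.of_associative_ring_bracket, hf, hg, this] }
  have hlow : ∀ k, ∀ x ∈ LieModule.lowerCentralSeries F N N k,
      ∃ b ∈ lcs mul B k, ∀ z : Z, ((x : Module.End F Z) z : A) = mul b z := by
    intro k
    induction k with
    | zero => intro x _; exact x.2
    | succ k ih =>
      intro x hx
      rw [LieModule.lowerCentralSeries_succ, ← LieSubmodule.mem_toSubmodule,
        LieSubmodule.lieIdeal_oper_eq_linear_span'] at hx
      induction hx using Submodule.span_induction with
      | mem x h =>
        obtain ⟨f, -, g, hg, rfl⟩ := h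
        obtain ⟨b, hb, hf⟩ := f.2
        obtain ⟨c, hc, hg⟩ := ih g hg
        refine ⟨mul b c, hh_mem hb hc, fun z => ?_⟩
        have := hleib b c z
        simp [LieRing.of_associative_ring_bracket, hf, hg, this]
      | zero => exact ⟨0, zero_mem _, fun z => by simp⟩
      | add x y _ _ hx hy =>
        obtain ⟨b, hb, hf⟩ := hx
        obtain ⟨c, hc, hg⟩ := hy
        exact ⟨b + c, add_mem hb hc, fun z => by simp [hf, hg]⟩
      | smul r x _ hx =>
        obtain ⟨b, hb, hf⟩ := hx
        exact ⟨r • b, Submodule.smul_mem _ r hb, fun z => by simp [hf]⟩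
  have : LieRing.IsNilpotent N := by
    refine LieModule.IsNilpotent.mk (R := F) (L := N) (M := N) (k := n) ?_
    rw [eq_bot_iff]
    intro x hx
    obtain ⟨b, hb, h⟩ := hlow n x hx
    rw [LieSubmodule.mem_bot]
    apply Subtype.ext
    ext z
    rw [h z, hn b hb z z.2]
    simp
  have key := hh_fitting (K := F) (L := N) (M := Z) (by
    intro m hm
    apply Subtype.ext
    refine hinv m m.2 fun b hb => ?_
    have := hm ⟨(mul b).restrict (hZ b hb), b, hb, fun z => rfl⟩
    exact congrArg Subtype.val this)
  intro z hz
  have hz' : (⟨z, hz⟩ : Z) ∈ (⁅(⊤ : LieIdeal F N), (⊤ : LieSubmodule F N Z)⁆ : LieSubmodule F N Z).toSubmodule := by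
    rw [key]; trivial
  rw [LieSubmodule.lieIdeal_oper_eq_linear_span'] at hz'
  have : Submodule.span F {x : Z | ∃ f ∈ (⊤ : LieIdeal F N), ∃ y ∈ (⊤ : LieSubmodule F N Z),
      ⁅f, y⁆ = x} ≤ (mulSub mul B Z).comap Z.subtype := by
    refine Submodule.span_le.mpr ?_
    rintro _ ⟨f, -, y, -, rfl⟩
    obtain ⟨b, hb, hf⟩ := f.2
    have e : ((⁅f, y⁆ : Z) : A) = mul b y := hf y
    change ((⁅f, y⁆ : Z) : A) ∈ mulSub mul B Z
    rw [e]
    exact hh_mem hb y.2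
  exact this hz'

end HH

/-- if `B` is subinvariant in `A` and `Z_A(B) = 0`, then
`Z_A(B^ω) ⊆ B^ω`. -/
theorem stmt_7 {F A : Type*} [Field F] [AddCommGroup A] [Module F A] [FiniteDimensional F A]
    (mul : A →ₗ[F] A →ₗ[F] A)
    (hleib : ∀ x y z : A, mul x (mul y z) = mul (mul x y) z + mul y (mul x z))
    (B : Submodule F A) (hB : IsSubinvariantIn mul B ⊤)
    (hZ : ∀ x ∈ centralizerSet mul B, x = 0) :
    centralizerSet mul (omegaSub mul B) ⊆ (omegaSub mul B : Set A) := by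
  have hid := hh_ideal hleib B hB
  obtain ⟨t, c, h0, ht, hs, hi⟩ := hB
  have hBs : IsSubalg mul B := h0 ▸ hs 0 (Nat.zero_le t)
  obtain ⟨n, hn⟩ := hh_stab B hBs
  set W := omegaSub mul B with hW
  let Z : Submodule F A :=
    { carrier := centralizerSet mul W
      add_mem' := by
        intro x y hx hy b hb
        simp [hx b hb, hy b hb]
      zero_mem' := by intro b hb; simp
      smul_mem' := by
        intro r x hx b hb
        simp [hx b hb] }
  have hZl : ∀ a, ∀ z ∈ Z, mul a z ∈ Z := by
    intro a z hz w hw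
    have e1 := hleib a z w
    have e2 := hleib w a z
    rw [(hz w hw).1, (hz _ (hid a w hw).1).1] at e1
    rw [(hz w hw).2, (hz _ (hid a w hw).2).2] at e2
    simp at e1 e2
    exact ⟨e1.symm, e2⟩
  have hBc : ∀ i ≤ t, B ≤ c i := by
    intro i
    induction i with
    | zero => intro _; rw [h0]
    | succ i ih => intro h; exact (ih (by omega)).trans (hi i (by omega)).1
  have hZr : ∀ a, ∀ z ∈ Z, mul z a ∈ Z := by
    intro a z hz w hw
    have e1 := hleib z a w
    have e2 := hleib w z a
    rw [(hz w hw).1, (hz _ (hid a w hw).1).1] at e1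
    rw [(hz w hw).2, (hz _ (hid a w hw).2).1] at e2
    simp at e1 e2
    exact ⟨e1.symm, e2⟩
  have hinv : ∀ z ∈ Z, (∀ b ∈ B, mul b z = 0) → z = 0 := by
    intro z hz hbz
    -- `z B^k = 0` for every `k`, by descending induction
    have hk : ∀ k ≤ n, ∀ b ∈ lcs mul B (n - k), mul z b = 0 := by
      intro k
      induction k with
      | zero =>
        intro _ b hb
        rw [Nat.sub_zero, hn n le_rfl] at hb
        exact (hz b hb).1
      | succ k ih =>
        intro hkn b hb
        apply hZ
        intro d hd
        constructor
        · have e1 := hleib z b d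
          have e2 := hleib b z d
          have hbB : b ∈ B := hh_anti B hBs (Nat.zero_le _) hb
          rw [hbz b hbB] at e2
          rw [e2] at e1
          simpa using e1
        · rw [hleib d z b, hbz d hd]
          have : mul d b ∈ lcs mul B (n - k) := by
            rw [show n - k = n - (k+1) + 1 by omega]
            exact hh_mem hd hb
          simp [ih (by omega) _ this]
    have hzB := hk n le_rfl
    rw [Nat.sub_self] at hzB
    exact hZ z fun b hb => ⟨hzB b hb, hbz b hb⟩
  have hfit : Z ≤ mulSub mul B Z := hh_fit_sub hleib B Z hBs (fun b _ => hZl b) n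
    (fun b hb z hz => (hz b (by rwa [hn n le_rfl] at hb)).2) hinv
  have hdown : ∀ k ≤ t, Z ≤ c (t - k) := by
    intro k
    induction k with
    | zero => intro _; rw [Nat.sub_zero, ht]; exact le_top
    | succ k ih =>
      intro hk
      refine hfit.trans (hh_le fun b hb z hz => ?_)
      refine ((hi (t-(k+1)) (by omega)).2 z ?_ b (hBc _ (by omega) hb)).2
      rw [show t-(k+1)+1 = t-k by omega]
      exact ih (by omega) hz
  have hlow : ∀ m, Z ≤ lcs mul B m := by
    intro m
    induction m with
    | zero =>
      have := hdown t le_rfl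
      rwa [Nat.sub_self, h0] at this
    | succ m ih => exact hfit.trans (hh_le fun b hb z hz => hh_mem hb (ih hz))
  intro z hz
  have : z ∈ lcs mul B n := hlow n hz
  rwa [hn n le_rfl] at this
end

section
/- Let A be a finite-dimensional left Leibniz algebra over a field F of characteristic zero, let R = rad(A) be its radical and N = nilrad(A) its nilradical. Then A·R + R·A ⊆ N. -/
open Submodule

open scoped TensorProduct in
open LieAlgebra in
/-- Over an algebraically closed field, `⁅L, I⁆` kills a nonzero vector. -/
lemma aux_closed {K L V : Type*} [Field K] [CharZero K] [IsAlgClosed K] [LieRing L]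
    [LieAlgebra K L] [AddCommGroup V] [Module K V] [FiniteDimensional K V] [Nontrivial V]
    [LieRingModule L V] [LieModule K L V] (I : LieIdeal K L) (k : ℕ)
    (hI : derivedSeriesOfIdeal K L k I = ⊥) :
    ∃ v : V, v ≠ 0 ∧ ∀ (x : L), ∀ a ∈ I, ⁅⁅x, a⁆, v⁆ = 0 := by
  have hs : IsSolvable I :=
    IsSolvable.mk (R := K) (k := k) ((LieIdeal.derivedSeries_eq_bot_iff I k).mpr hI)
  obtain ⟨χ, hχ⟩ := LieModule.exists_nontrivial_weightSpace_of_isSolvable K I V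
  obtain ⟨⟨v, hv⟩, hv0⟩ := exists_ne (0 : LieModule.weightSpace V χ)
  refine ⟨v, by simpa using hv0, ?_⟩
  have key : ∀ x : L, ⁅x, v⁆ ∈ LieModule.weightSpace V χ := fun x =>
    (LieModule.weightSpaceOfIsLieTower (L := L) K V (χ : I → K)).lie_mem (x := x) (m := v) hv
  intro x a ha
  have h1 := (LieModule.mem_weightSpace _ _).1 hv ⟨a, ha⟩
  have h2 := (LieModule.mem_weightSpace _ _).1 (key x) ⟨a, ha⟩
  change ⁅a, v⁆ = _ at h1
  change ⁅a, ⁅x, v⁆⁆ = _ at h2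
  rw [lie_lie, h1, h2, lie_smul, sub_self]

open scoped TensorProduct in
open LieAlgebra in
lemma aux_field {F L V : Type*} [Field F] [CharZero F] [LieRing L]
    [LieAlgebra F L] [AddCommGroup V] [Module F V] [FiniteDimensional F V] [Nontrivial V]
    [LieRingModule L V] [LieModule F L V] (I : LieIdeal F L) (k : ℕ)
    (hI : derivedSeriesOfIdeal F L k I = ⊥) :
    ∃ v : V, v ≠ 0 ∧ ∀ (x : L), ∀ a ∈ I, ⁅⁅x, a⁆, v⁆ = 0 := by
  let K := AlgebraicClosure F
  have : CharZero K := charZero_of_injective_algebraMap (algebraMap F K).injective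
  have hI' : derivedSeriesOfIdeal K (K ⊗[F] L) k (I.baseChange K) = ⊥ := by
    rw [derivedSeriesOfIdeal_baseChange, hI, LieSubmodule.baseChange_bot]
  obtain ⟨w, hw0, hw⟩ := aux_closed (V := K ⊗[F] V) (I.baseChange K) k hI'
  classical
  let b := Module.Basis.ofVectorSpace F K
  let e := TensorProduct.equivFinsuppOfBasisLeft (N := V) b
  have he : e w ≠ 0 := by simpa using hw0
  obtain ⟨i, hi⟩ := Finsupp.ne_iff.1 he
  refine ⟨e w i, by simpa using hi, fun x a ha => ?_⟩
  have h1 := hw (1 ⊗ₜ x) (1 ⊗ₜ a) (LieSubmodule.tmul_mem_baseChange_of_mem _ ha)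
  rw [LieAlgebra.ExtendScalars.bracket_tmul, one_mul] at h1
  have comm : ∀ (y : L) (u : K ⊗[F] V), e ⁅(1 : K) ⊗ₜ[F] y, u⁆ i = ⁅y, e u i⁆ := by
    intro y u
    induction u with
    | zero => simp
    | add p q hp hq => simp [hp, hq]
    | tmul c v =>
      simp [e, TensorProduct.equivFinsuppOfBasisLeft_apply_tmul_apply, lie_smul]
  rw [← comm, h1]
  simp

open LieAlgebra in
lemma aux_nilp {F L : Type*} [Field F] [CharZero F] [LieRing L]
    [LieAlgebra F L] (I : LieIdeal F L) (k : ℕ)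
    (hI : derivedSeriesOfIdeal F L k I = ⊥) (n : ℕ) :
    ∀ (V : Type _) [AddCommGroup V] [Module F V] [FiniteDimensional F V]
    [LieRingModule L V] [LieModule F L V], Module.finrank F V = n →
    ∃ m, (⁅(⊤ : LieIdeal F L), I⁆ : LieIdeal F L).lcs V m = ⊥ := by
  induction n using Nat.strong_induction_on with
  | _ n ih =>
  intro V _ _ _ _ _ hn
  obtain hV | hV := subsingleton_or_nontrivial V
  · exact ⟨0, Subsingleton.elim _ _⟩
  obtain ⟨v, hv0, hv⟩ := aux_field (V := V) I k hI
  set J : LieIdeal F L := ⁅(⊤ : LieIdeal F L), I⁆ with hJ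
  have hvJ : ∀ j ∈ J, ⁅j, v⁆ = 0 := by
    intro j hj
    rw [hJ, ← LieSubmodule.mem_toSubmodule, LieSubmodule.lieIdeal_oper_eq_linear_span'] at hj
    induction hj using Submodule.span_induction with
    | mem x h => obtain ⟨x, -, a, ha, rfl⟩ := h; exact hv x a ha
    | zero => simp
    | add x y _ _ hx hy => simp [hx, hy]
    | smul c x _ hx => simp [hx]
  let W : LieSubmodule F L V :=
    { carrier := {u | ∀ j ∈ J, ⁅j, u⁆ = 0}
      add_mem' := fun {a b} ha hb j hj => by simp [ha j hj, hb j hj]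
      zero_mem' := by simp
      smul_mem' := fun c u hu j hj => by simp [hu j hj]
      lie_mem := fun {x u} hu j hj => by
        have h1 := hu j hj
        have h2 := hu ⁅j, x⁆ (lie_mem_left F L J j x hj)
        rw [leibniz_lie, h2, h1, lie_zero, add_zero] }
  have hlt : Module.finrank F (V ⧸ W) < n := by
    rw [← hn]
    have h1 := Submodule.finrank_quotient_add_finrank W.toSubmodule
    have h2 : 0 < Module.finrank F W.toSubmodule := by
      have : Nontrivial W.toSubmodule := nontrivial_of_ne ⟨v, hvJ⟩ 0
        (fun h => hv0 (congrArg Subtype.val h))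
      exact Module.finrank_pos
    change Module.finrank F (V ⧸ W.toSubmodule) < _
    omega
  obtain ⟨m, hm⟩ := ih _ hlt (V ⧸ W) rfl
  have hmap : ∀ m, (J.lcs V m).map (LieSubmodule.Quotient.mk' W) ≤ J.lcs (V ⧸ W) m := by
    intro m
    induction m with
    | zero => simp
    | succ m ihm =>
      rw [LieIdeal.lcs_succ, LieIdeal.lcs_succ, LieSubmodule.map_bracket_eq]
      exact LieSubmodule.mono_lie_right J ihm
  refine ⟨m + 1, ?_⟩
  have hle : J.lcs V m ≤ W := by
    rw [← LieSubmodule.Quotient.map_mk'_eq_bot_le]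
    exact le_bot_iff.1 (hm ▸ hmap m)
  rw [LieIdeal.lcs_succ, ← le_bot_iff, LieSubmodule.lie_le_iff]
  intro x hx u hu
  exact (LieSubmodule.mem_bot _).2 (hle hu x hx)

lemma mulSub_mem {F A : Type*} [Field F] [AddCommGroup A] [Module F A]
    (mul : A →ₗ[F] A →ₗ[F] A) {B C : Submodule F A} {b c : A} (hb : b ∈ B) (hc : c ∈ C) :
    mul b c ∈ mulSub mul B C := Submodule.subset_span ⟨b, hb, c, hc, rfl⟩

lemma mulSub_le {F A : Type*} [Field F] [AddCommGroup A] [Module F A]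
    (mul : A →ₗ[F] A →ₗ[F] A) {B C D : Submodule F A}
    (h : ∀ b ∈ B, ∀ c ∈ C, mul b c ∈ D) : mulSub mul B C ≤ D :=
  Submodule.span_le.2 (by rintro _ ⟨b, hb, c, hc, rfl⟩; exact h b hb c hc)

open LieAlgebra in
attribute [local instance] LieRing.ofAssociativeRing in
/-- Image of a solvable ideal in the Lie algebra of left multiplications. -/
lemma aux_leib {F A : Type*} [Field F] [CharZero F]
    [AddCommGroup A] [Module F A] [FiniteDimensional F A]
    (mul : A →ₗ[F] A →ₗ[F] A)
    (hleib : ∀ x y z : A, mul x (mul y z) = mul (mul x y) z + mul y (mul x z))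
    (R : Submodule F A) (hR : IsIdealIn mul R ⊤) (hs : IsSolvableSub mul R) :
    IsNilpotentSub mul (fSub mul ⊤ R) := by
  have hbr : ∀ x y : A, ⁅mul x, mul y⁆ = mul (mul x y) := by
    intro x y
    ext z
    simp [LieRing.of_associative_ring_bracket, hleib x y z]
  let g : LieSubalgebra F (Module.End F A) :=
    { LinearMap.range mul with
      lie_mem' := by
        rintro _ _ ⟨x, rfl⟩ ⟨y, rfl⟩
        exact ⟨mul x y, (hbr x y).symm⟩ }
  let ρ : A → g := fun x => ⟨mul x, x, rfl⟩
  have hρ : ∀ x y, ⁅ρ x, ρ y⁆ = ρ (mul x y) := fun x y => Subtype.ext (hbr x y)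
  have hsurj : ∀ y : g, ∃ x, ρ x = y := by
    rintro ⟨_, x, rfl⟩; exact ⟨x, rfl⟩
  let ρl : A →ₗ[F] g :=
    { toFun := ρ
      map_add' := fun x y => Subtype.ext (map_add mul x y)
      map_smul' := fun c x => Subtype.ext (map_smul mul c x) }
  let I : LieIdeal F g :=
    { R.map ρl with
      lie_mem := by
        rintro y _ ⟨r, hr, rfl⟩
        obtain ⟨x, rfl⟩ := hsurj y
        exact ⟨mul x r, (hR.2 x trivial r hr).1, (hρ x r).symm⟩ }
  have hds : ∀ k, (derivedSeriesOfIdeal F g k I).toSubmodule ≤ (ds mul R k).map ρl := by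
    intro k
    induction k with
    | zero => exact le_rfl
    | succ k ih =>
      rw [derivedSeriesOfIdeal_succ, LieSubmodule.lieIdeal_oper_eq_linear_span',
        Submodule.span_le]
      rintro _ ⟨x, hx, y, hy, rfl⟩
      obtain ⟨x, hx2, rfl⟩ := ih hx
      obtain ⟨y, hy2, rfl⟩ := ih hy
      exact ⟨mul x y, mulSub_mem mul hx2 hy2, (hρ x y).symm⟩
  obtain ⟨k, hk⟩ := hs
  have hI : derivedSeriesOfIdeal F g k I = ⊥ := by
    have := hds k
    rw [hk, Submodule.map_bot, le_bot_iff] at this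
    simpa using this
  obtain ⟨m, hm⟩ := aux_nilp I k hI _ A rfl
  set J : LieIdeal F g := ⁅(⊤ : LieIdeal F g), I⁆ with hJ
  have hT : fSub mul ⊤ R ≤ J.toSubmodule.comap ρl := by
    refine sup_le (mulSub_le mul fun b _ c hc => ?_) (mulSub_le mul fun b hb c _ => ?_)
    · change ρ (mul b c) ∈ J
      rw [← hρ]
      exact LieSubmodule.lie_mem_lie (LieSubmodule.mem_top _) ⟨c, hc, rfl⟩
    · change ρ (mul b c) ∈ J
      rw [← hρ, ← lie_skew]
      exact neg_mem (LieSubmodule.lie_mem_lie (LieSubmodule.mem_top _) ⟨b, hb, rfl⟩)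
  have hl : ∀ n, lcs mul (fSub mul ⊤ R) n ≤ (J.lcs A n).toSubmodule := by
    intro n
    induction n with
    | zero => simp
    | succ n ih =>
      refine mulSub_le mul fun b hb c hc => ?_
      rw [LieIdeal.lcs_succ]
      exact LieSubmodule.lie_mem_lie (x := ρ b) (m := c) (hT hb) (ih hc)
  refine ⟨m, le_bot_iff.1 ?_⟩
  have := hl m
  rwa [hm] at this

lemma aux_ideal {F A : Type*} [Field F] [AddCommGroup A] [Module F A]
    (mul : A →ₗ[F] A →ₗ[F] A)
    (hleib : ∀ x y z : A, mul x (mul y z) = mul (mul x y) z + mul y (mul x z))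
    (R : Submodule F A) (hR : IsIdealIn mul R ⊤) :
    IsIdealIn mul (fSub mul ⊤ R) ⊤ := by
  refine ⟨le_top, fun x _ y hy => ?_⟩
  have l : ∀ a, ∀ r ∈ R, mul a r ∈ fSub mul ⊤ R := fun a r hr =>
    Submodule.mem_sup_left (mulSub_mem mul trivial hr)
  have r : ∀ a, ∀ r ∈ R, mul r a ∈ fSub mul ⊤ R := fun a r hr =>
    Submodule.mem_sup_right (mulSub_mem mul hr trivial)
  have hle : fSub mul ⊤ R ≤ R :=
    sup_le (mulSub_le mul fun b _ c hc => (hR.2 b trivial c hc).1)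
      (mulSub_le mul fun b hb c _ => (hR.2 c trivial b hb).2)
  exact ⟨l x y (hle hy), r x y (hle hy)⟩

/-- over characteristic zero, `A·R + R·A ⊆ N` where `R = rad(A)`,
`N = nilrad(A)`. -/
theorem stmt_8 {F A : Type*} [Field F] [CharZero F]
    [AddCommGroup A] [Module F A] [FiniteDimensional F A]
    (mul : A →ₗ[F] A →ₗ[F] A)
    (hleib : ∀ x y z : A, mul x (mul y z) = mul (mul x y) z + mul y (mul x z))
    (R N : Submodule F A)
    (hR : IsRadicalIn mul ⊤ R) (hN : IsNilradicalIn mul ⊤ N) :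
    fSub mul ⊤ R ≤ N := by
  exact hN.2.2 _ (aux_ideal mul hleib R hR.1) (aux_leib mul hleib R hR.1 hR.2.1)
end

section
/- Let A be a solvable finite-dimensional left Leibniz algebra over a field F of characteristic zero. Then A² = A·A is nilpotent. -/
open Submodule

open LieAlgebra in
theorem aux_closed_s9 {K L : Type*} [Field K] [CharZero K] [IsAlgClosed K] [LieRing L] [LieAlgebra K L]
    [IsSolvable L] (d : ℕ) : ∀ (M : Type _) [AddCommGroup M] [Module K M] [Module.Finite K M]
    [LieRingModule L M] [LieModule K L M], Module.finrank K M = d →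
    ∀ x ∈ derivedSeries K L 1, IsNilpotent (LieModule.toEnd K L M x) := by
  induction d using Nat.strong_induction_on with
  | _ d ih =>
  intro M _ _ _ _ _ hd x hx
  rcases subsingleton_or_nontrivial M with hM | hM
  · exact ⟨1, by ext m; exact Subsingleton.elim _ _⟩
  obtain ⟨χ, hχ⟩ := LieModule.exists_nontrivial_weightSpace_of_isSolvable K L M
  obtain ⟨⟨v, hv⟩, hv0⟩ := exists_ne (0 : LieModule.weightSpace M χ)
  have hv0' : v ≠ 0 := fun h => hv0 (Subtype.ext h)
  rw [LieModule.mem_weightSpace] at hv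
  let N : LieSubmodule K L M :=
    { K ∙ v with
      lie_mem := by
        intro y m hm
        obtain ⟨c, rfl⟩ := Submodule.mem_span_singleton.1 hm
        change ⁅y, c • v⁆ ∈ K ∙ v
        rw [lie_smul, hv]
        exact Submodule.smul_mem _ _ (Submodule.smul_mem _ _ (Submodule.mem_span_singleton_self v)) }
  have hvN : v ∈ N := Submodule.mem_span_singleton_self v
  have hxv : ⁅x, v⁆ = 0 := by
    have hx' : x ∈ (⁅(⊤ : LieIdeal K L), (⊤ : LieIdeal K L)⁆ : LieIdeal K L) := hx
    rw [← LieSubmodule.mem_toSubmodule, LieSubmodule.lieIdeal_oper_eq_linear_span'] at hx'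
    clear hx
    induction hx' using Submodule.span_induction with
    | mem z hz =>
      obtain ⟨a, -, b, -, rfl⟩ := hz
      rw [lie_lie, hv, hv, lie_smul, lie_smul, hv, hv, smul_smul, smul_smul, mul_comm, sub_self]
    | zero => simp
    | add a b _ _ ha hb => rw [add_lie, ha, hb, add_zero]
    | smul c a _ ha => rw [smul_lie, ha, smul_zero]
  have hlt : Module.finrank K (M ⧸ N) < d := by
    rw [← hd]
    have h1 := Submodule.finrank_quotient_add_finrank (N : Submodule K M)
    have h2 : 0 < Module.finrank K (N : Submodule K M) := by
      have : Nontrivial (N : Submodule K M) := ⟨⟨⟨v, hvN⟩, 0, fun h => hv0' (congrArg Subtype.val h)⟩⟩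
      exact Module.finrank_pos
    change Module.finrank K (M ⧸ (N : Submodule K M)) < _
    omega
  obtain ⟨n, hn⟩ := ih _ hlt (M ⧸ N) rfl x hx
  refine ⟨n + 1, ?_⟩
  ext m
  have hk : ∀ k (m : M), LieSubmodule.Quotient.mk (N := N) ((LieModule.toEnd K L M x ^ k) m) =
      (LieModule.toEnd K L (M ⧸ N) x ^ k) (LieSubmodule.Quotient.mk m) := by
    intro k
    induction k with
    | zero => intro m; rfl
    | succ k ihk => 
      intro m
      rw [pow_succ, pow_succ, Module.End.mul_apply, Module.End.mul_apply, ihk]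
      rfl
  have h3 := hk n m
  rw [hn, LinearMap.zero_apply] at h3
  replace h3 : _ ∈ N := (LieSubmodule.Quotient.mk_eq_zero N).1 h3
  obtain ⟨c, hc⟩ := Submodule.mem_span_singleton.1 (show _ ∈ K ∙ v from h3)
  rw [pow_succ', Module.End.mul_apply, ← hc]
  simp [hxv]

open LieAlgebra TensorProduct in
theorem aux_nilp_s9 {R L M : Type*} [Field R] [CharZero R] [LieRing L] [LieAlgebra R L]
    [IsSolvable L] [AddCommGroup M] [Module R M] [Module.Finite R M]
    [LieRingModule L M] [LieModule R L M] :
    LieModule.IsNilpotent (derivedSeries R L 1) M := by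
  let K := AlgebraicClosure R
  have : CharZero K := charZero_of_injective_algebraMap (algebraMap R K).injective
  rw [LieModule.isNilpotent_iff_forall' (R := R)]
  intro ⟨x, hx⟩
  have hs : IsSolvable (K ⊗[R] L) := inferInstance
  have hx_ext : 1 ⊗ₜ[R] x ∈ derivedSeries K (K ⊗[R] L) 1 := by
    rw [derivedSeries_baseChange]
    exact Submodule.tmul_mem_baseChange_of_mem 1 hx
  have hbc_inj : Function.Injective (Module.End.baseChangeHom R K M) :=
    LinearMap.baseChangeHom_injective R M K
  have aux : (LieModule.toEnd R (derivedSeries R L 1) M ⟨x, hx⟩).baseChangeHom R K M =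
      (LieModule.toEnd R L M x).baseChange K := rfl
  rw [← IsNilpotent.map_iff hbc_inj, aux, ← LieModule.toEnd_baseChange]
  exact aux_closed_s9 _ (K ⊗[R] M) rfl _ hx_ext

attribute [local instance] LieRing.ofAssociativeRing

/-- over characteristic zero, if `A` is solvable then `A²` is
nilpotent. -/
theorem stmt_9 {F A : Type*} [Field F] [CharZero F]
    [AddCommGroup A] [Module F A] [FiniteDimensional F A]
    (mul : A →ₗ[F] A →ₗ[F] A)
    (hleib : ∀ x y z : A, mul x (mul y z) = mul (mul x y) z + mul y (mul x z))
    (hsolv : IsSolvableSub mul (⊤ : Submodule F A)) :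
    IsNilpotentSub mul (mulSub mul ⊤ ⊤) := by
  let G : LieSubalgebra F (Module.End F A) :=
    { LinearMap.range mul with
      lie_mem' := by
        rintro _ _ ⟨x, rfl⟩ ⟨y, rfl⟩
        refine ⟨mul x y, ?_⟩
        ext z
        rw [Ring.lie_def]
        simp [hleib x y z] }
  have hG : ∀ x, mul x ∈ G := fun x => ⟨x, rfl⟩
  have hlie : ∀ x y, mul (mul x y) = ⁅mul x, mul y⁆ := by
    intro x y
    ext z
    rw [Ring.lie_def]
    simp [hleib x y z]
  have hder : ∀ n, ∀ x ∈ LieAlgebra.derivedSeries F G n, (x : Module.End F A) ∈ (ds mul ⊤ n).map mul := by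
    intro n
    induction n with
    | zero =>
      rintro ⟨_, ⟨x, rfl⟩⟩ -
      exact ⟨x, Submodule.mem_top, rfl⟩
    | succ n ih =>
      intro x hx
      rw [LieAlgebra.derivedSeries_def, LieAlgebra.derivedSeriesOfIdeal_succ,
        ← LieSubmodule.mem_toSubmodule, LieSubmodule.lieIdeal_oper_eq_linear_span'] at hx
      induction hx using Submodule.span_induction with
      | mem z hz =>
        obtain ⟨a, ha, b, hb, rfl⟩ := hz
        obtain ⟨a', ha', haa⟩ := ih a ha
        obtain ⟨b', hb', hbb⟩ := ih b hb
        refine ⟨mul a' b', Submodule.subset_span ⟨a', ha', b', hb', rfl⟩, ?_⟩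
        rw [hlie, haa, hbb]; rfl
      | zero => exact Submodule.zero_mem _
      | add a b _ _ ha hb => exact Submodule.add_mem _ ha hb
      | smul c a _ ha => exact Submodule.smul_mem _ c ha
  have hsol : LieAlgebra.IsSolvable G := by
    obtain ⟨m, hm⟩ := hsolv
    refine LieAlgebra.IsSolvable.mk (R := F) (k := m) ?_
    rw [LieSubmodule.eq_bot_iff]
    intro x hx
    have := hder m x hx
    rw [hm, Submodule.map_bot, Submodule.mem_bot] at this
    exact Subtype.ext this
  have hN : LieModule.IsNilpotent (LieAlgebra.derivedSeries F G 1) A := aux_nilp_s9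
  have hmem : ∀ b ∈ mulSub mul ⊤ ⊤, (⟨mul b, hG b⟩ : G) ∈ LieAlgebra.derivedSeries F G 1 := by
    intro b hb
    induction hb using Submodule.span_induction with
    | mem z hz =>
      obtain ⟨a, -, b, -, rfl⟩ := hz
      have h : (⟨mul (mul a b), hG _⟩ : G) = ⁅(⟨mul a, hG a⟩ : G), (⟨mul b, hG b⟩ : G)⁆ :=
        Subtype.ext (hlie a b)
      rw [h]
      exact LieSubmodule.lie_mem_lie (LieSubmodule.mem_top _) (LieSubmodule.mem_top _)
    | zero =>
      convert LieSubmodule.zero_mem _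
      simp
    | add a b _ _ ha hb =>
      convert add_mem ha hb
      simp
    | smul c a _ ha =>
      convert SMulMemClass.smul_mem c ha
      simp
  have hle : ∀ n, ∀ x ∈ lcs mul (mulSub mul ⊤ ⊤) n,
      x ∈ LieModule.lowerCentralSeries F (LieAlgebra.derivedSeries F G 1) A n := by
    intro n
    induction n with
    | zero => intro x _; exact LieSubmodule.mem_top x
    | succ n ih =>
      intro x hx
      induction hx using Submodule.span_induction with
      | mem z hz =>
        obtain ⟨b, hb, c, hc, rfl⟩ := hz
        rw [LieModule.lowerCentralSeries_succ]
        exact LieSubmodule.lie_mem_lie (x := (⟨⟨mul b, hG b⟩, hmem b hb⟩ :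
          LieAlgebra.derivedSeries F G 1)) (LieSubmodule.mem_top _) (ih c hc)
      | zero => exact LieSubmodule.zero_mem _
      | add a b _ _ ha hb => exact add_mem ha hb
      | smul c a _ ha => exact SMulMemClass.smul_mem c ha
  obtain ⟨m, hm⟩ := (LieModule.isNilpotent_iff F (LieAlgebra.derivedSeries F G 1) A).1 hN
  refine ⟨m, ?_⟩
  rw [Submodule.eq_bot_iff]
  intro x hx
  have := hle m x hx
  rw [hm] at this
  exact this
end

section
/- Let A be a finite-dimensional left Leibniz algebra over a field F of characteristic zero and let R = rad(A) be its radical. Then A² ∩ R = A·R + R·A. -/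
open Submodule

section LeibnizProof

open LieAlgebra

lemma casimir_coord {F L : Type*} [Field F] [LieRing L] [LieAlgebra F L]
    [FiniteDimensional F L] {ι : Type*} [Fintype ι] [DecidableEq ι] (b d : Module.Basis ι F L)
    (hbd : ∀ i j, killingForm F L (d i) (b j) = if j = i then 1 else 0) (v : L) (i : ι) :
    b.repr v i = killingForm F L (d i) v := by
  conv_rhs => rw [← b.sum_repr v]
  simp only [map_sum, map_smul, LinearMap.sum_apply, LinearMap.smul_apply, hbd]
  simp

lemma casimir_coord' {F L : Type*} [Field F] [LieRing L] [LieAlgebra F L]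
    [FiniteDimensional F L] {ι : Type*} [Fintype ι] [DecidableEq ι] (b d : Module.Basis ι F L)
    (hbd : ∀ i j, killingForm F L (d i) (b j) = if j = i then 1 else 0) (v : L) (i : ι) :
    d.repr v i = killingForm F L v (b i) := by
  conv_rhs => rw [← d.sum_repr v]
  simp only [map_sum, map_smul, LinearMap.sum_apply, LinearMap.smul_apply, hbd]
  simp

lemma casimir_adjoint {F L : Type*} [Field F] [LieRing L] [LieAlgebra F L]
    [FiniteDimensional F L] [IsKilling F L]
    {ι : Type*} [Fintype ι] [DecidableEq ι] (b d : Module.Basis ι F L)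
    (hbd : ∀ i j, killingForm F L (d i) (b j) = if j = i then 1 else 0) (x : L) :
    ∑ i, ⁅b i, ⁅d i, x⁆⁆ = x := by
  have hk := IsKilling.ker_killingForm_eq_bot F L
  refine LinearMap.ker_eq_bot.mp hk (LinearMap.ext fun y => ?_)
  rw [map_sum, LinearMap.sum_apply, killingForm_apply_apply, LinearMap.trace_eq_matrix_trace F b,
    Matrix.trace]
  refine Finset.sum_congr rfl fun i _ => ?_
  rw [Matrix.diag_apply, LinearMap.toMatrix_apply, casimir_coord b d hbd]
  rw [LieModule.traceForm_apply_lie_apply', LieModule.traceForm_apply_lie_apply]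
  simp only [LinearMap.comp_apply, LieAlgebra.ad_apply]
  rw [← lie_skew y (b i), lie_neg, map_neg]

lemma casimir_invariant {F L M : Type*} [Field F] [LieRing L] [LieAlgebra F L]
    [FiniteDimensional F L] [AddCommGroup M] [Module F M]
    {ι : Type*} [Fintype ι] [DecidableEq ι] (b d : Module.Basis ι F L)
    (hbd : ∀ i j, killingForm F L (d i) (b j) = if j = i then 1 else 0)
    (Φ : L →ₗ[F] L →ₗ[F] M) (a : L) :
    ∑ i, (Φ ⁅a, b i⁆ (d i) + Φ (b i) ⁅a, d i⁆) = 0 := by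
  rw [Finset.sum_add_distrib]
  have h1 : ∀ i, Φ ⁅a, b i⁆ (d i) =
      ∑ j, killingForm F L (d j) ⁅a, b i⁆ • Φ (b j) (d i) := by
    intro i
    conv_lhs => rw [← b.sum_repr ⁅a, b i⁆]
    simp only [map_sum, map_smul, LinearMap.sum_apply, LinearMap.smul_apply, casimir_coord b d hbd]
  have h2 : ∀ i, Φ (b i) ⁅a, d i⁆ =
      ∑ j, killingForm F L ⁅a, d i⁆ (b j) • Φ (b i) (d j) := by
    intro i
    conv_lhs => rw [← d.sum_repr ⁅a, d i⁆]
    simp only [map_sum, map_smul, LinearMap.sum_apply, LinearMap.smul_apply, casimir_coord' b d hbd]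
  simp_rw [h1, h2]
  rw [Finset.sum_comm, ← Finset.sum_add_distrib]
  refine Finset.sum_eq_zero fun i _ => ?_
  rw [← Finset.sum_add_distrib]
  refine Finset.sum_eq_zero fun j _ => ?_
  rw [LieModule.traceForm_apply_lie_apply', neg_smul, add_neg_cancel]

variable {F A : Type*} [Field F] [AddCommGroup A] [Module F A]

lemma mul_mem_mulSub (mul : A →ₗ[F] A →ₗ[F] A) {B C : Submodule F A} {x y : A}
    (hx : x ∈ B) (hy : y ∈ C) : mul x y ∈ mulSub mul B C :=
  Submodule.subset_span ⟨x, hx, y, hy, rfl⟩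

lemma mulSub_le_iff (mul : A →ₗ[F] A →ₗ[F] A) {B C D : Submodule F A} :
    mulSub mul B C ≤ D ↔ ∀ x ∈ B, ∀ y ∈ C, mul x y ∈ D := by
  refine ⟨fun h x hx y hy => h (mul_mem_mulSub mul hx hy), fun h => ?_⟩
  refine Submodule.span_le.mpr ?_
  rintro _ ⟨x, hx, y, hy, rfl⟩
  exact h x hx y hy

lemma fSub_left_stable (mul : A →ₗ[F] A →ₗ[F] A)
    (hleib : ∀ x y z : A, mul x (mul y z) = mul (mul x y) z + mul y (mul x z))
    (R : Submodule F A) (hR : IsIdealIn mul R ⊤) (x : A) :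
    ∀ z ∈ fSub mul ⊤ R, mul x z ∈ fSub mul ⊤ R := by
  suffices fSub mul ⊤ R ≤ (fSub mul ⊤ R).comap (mul x) from this
  have hl : ∀ a : A, ∀ r ∈ R, mul a r ∈ fSub mul ⊤ R := fun a r hr =>
    Submodule.mem_sup_left (mul_mem_mulSub mul Submodule.mem_top hr)
  have hr : ∀ a : A, ∀ r ∈ R, mul r a ∈ fSub mul ⊤ R := fun a r hr =>
    Submodule.mem_sup_right (mul_mem_mulSub mul hr Submodule.mem_top)
  refine sup_le ((mulSub_le_iff mul).mpr ?_) ((mulSub_le_iff mul).mpr ?_)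
  · intro a _ r hr'
    rw [Submodule.mem_comap, hleib]
    exact add_mem (hl _ _ hr') (hl _ _ (hR.2 x Submodule.mem_top r hr').1)
  · intro r hr' a _
    rw [Submodule.mem_comap, hleib]
    exact add_mem (hr _ _ (hR.2 x Submodule.mem_top r hr').1) (hr _ _ hr')

lemma leibniz_core {L : Type*} [LieRing L] [LieAlgebra F L] [FiniteDimensional F L]
    [IsKilling F L] (mul : A →ₗ[F] A →ₗ[F] A)
    (hleib : ∀ x y z : A, mul x (mul y z) = mul (mul x y) z + mul y (mul x z))
    (R : Submodule F A) (hR : IsIdealIn mul R ⊤)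
    (π : A →ₗ[F] L) (hsurj : Function.Surjective π) (hker : ∀ x, π x = 0 ↔ x ∈ R)
    (hπ : ∀ x y, π (mul x y) = ⁅π x, π y⁆) :
    mulSub mul ⊤ ⊤ ⊓ R ≤ fSub mul ⊤ R := by
  classical
  obtain ⟨s, hs⟩ := π.exists_rightInverse_of_surjective (LinearMap.range_eq_top.mpr hsurj)
  have hs' : ∀ u, π (s u) = u := fun u => LinearMap.congr_fun hs u
  let b := Module.finBasis F L
  let d := LinearMap.BilinForm.dualBasis (killingForm F L)
    (IsKilling.killingForm_nondegenerate F L) b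
  have hbd : ∀ i j, killingForm F L (d i) (b j) = if j = i then 1 else 0 := fun i j =>
    LinearMap.BilinForm.apply_dualBasis_left _ b i j
  set J := fSub mul ⊤ R with hJ
  have hl : ∀ a : A, ∀ r ∈ R, mul a r ∈ J := fun a r hr =>
    Submodule.mem_sup_left (mul_mem_mulSub mul Submodule.mem_top hr)
  have hr : ∀ a : A, ∀ r ∈ R, mul r a ∈ J := fun a r hr =>
    Submodule.mem_sup_right (mul_mem_mulSub mul hr Submodule.mem_top)
  have hst := fSub_left_stable mul hleib R hR
  rw [← hJ] at hst
  let c : A →ₗ[F] A := ∑ i, (mul (s (b i))) ∘ₗ (mul (s (d i)))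
  have hc : ∀ y, c y = ∑ i, mul (s (b i)) (mul (s (d i)) y) := by
    intro y; simp [c]
  -- `c` kills `R` modulo `J`
  have hcR : ∀ z ∈ R, c z ∈ J := by
    intro z hz
    rw [hc]
    exact sum_mem fun i _ => hst _ _ (hl _ _ hz)
  -- `c` is the identity modulo `R`
  have hc1 : ∀ y, c y - y ∈ R := by
    intro y
    rw [← hker, map_sub, sub_eq_zero, hc, map_sum]
    simp_rw [hπ, hs']
    exact casimir_adjoint b d hbd (π y)
  have hbr : ∀ a u, mul a (s u) - s ⁅π a, u⁆ ∈ R := by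
    intro a u
    rw [← hker, map_sub, hπ, hs', hs', sub_self]
  -- `c` commutes with left multiplications modulo `J`
  have hcomm : ∀ a y, mul a (c y) - c (mul a y) ∈ J := by
    intro a y
    let Φ : L →ₗ[F] L →ₗ[F] A :=
      LinearMap.mk₂ F (fun u v => mul (s u) (mul (s v) y))
        (by intros; simp) (by intros; simp) (by intros; simp) (by intros; simp)
    have h0 := casimir_invariant b d hbd Φ (π a)
    have key : mul a (c y) - c (mul a y) =
        ∑ i, (mul (mul a (s (b i)) - s ⁅π a, b i⁆) (mul (s (d i)) y) +
          mul (s (b i)) (mul (mul a (s (d i)) - s ⁅π a, d i⁆) y)) := by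
      rw [← sub_zero (mul a (c y) - c (mul a y)), ← h0, hc, hc, map_sum,
        ← Finset.sum_sub_distrib, ← Finset.sum_sub_distrib]
      refine Finset.sum_congr rfl fun i _ => ?_
      rw [hleib a, hleib a (s (d i)) y]
      simp only [Φ, LinearMap.mk₂_apply, map_add, map_sub, LinearMap.sub_apply]
      abel
    rw [key]
    exact sum_mem fun i _ => add_mem (hr _ _ (hbr _ _)) (hst _ _ (hr _ _ (hbr _ _)))
  have hid : ∀ w ∈ mulSub mul ⊤ ⊤, w - c w ∈ J := by
    suffices mulSub mul ⊤ ⊤ ≤ J.comap (LinearMap.id - c) from fun w hw => this hw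
    refine (mulSub_le_iff mul).mpr fun x _ y _ => ?_
    have h1 := hcomm x y
    have h2 := hl x _ (hc1 y)
    have h3 := sub_mem h1 h2
    rw [Submodule.mem_comap, LinearMap.sub_apply, LinearMap.id_apply]
    convert h3 using 1
    rw [map_sub]
    abel
  rintro z ⟨hz1, hz2⟩
  have := add_mem (hid z hz1) (hcR z hz2)
  rwa [sub_add_cancel] at this

lemma ds_mono_of_le (mul : A →ₗ[F] A →ₗ[F] A) {T R : Submodule F A}
    (h : mulSub mul T T ≤ R) (n : ℕ) : ds mul T (n + 1) ≤ ds mul R n := by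
  induction n with
  | zero => exact h
  | succ n ih =>
    refine (mulSub_le_iff mul).mpr fun x hx y hy => ?_
    exact mul_mem_mulSub mul (ih hx) (ih hy)

lemma sq_mem_radical (mul : A →ₗ[F] A →ₗ[F] A)
    (hleib : ∀ x y z : A, mul x (mul y z) = mul (mul x y) z + mul y (mul x z))
    (R : Submodule F A) (hR : IsRadicalIn mul ⊤ R) (x : A) : mul x x ∈ R := by
  let T : Submodule F A := Submodule.span F {z | ∃ x, mul x x = z}
  have hT0 : ∀ z ∈ T, ∀ y, mul z y = 0 := by
    intro z hz y
    induction hz using Submodule.span_induction with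
    | mem z hz =>
      obtain ⟨x, rfl⟩ := hz
      have := hleib x x y
      simpa using this
    | zero => simp
    | add u v _ _ hu hv => simp [hu, hv]
    | smul a u _ hu => simp [hu]
  have hsq : ∀ x, mul x x ∈ T := fun x => Submodule.subset_span ⟨x, rfl⟩
  refine hR.2.2 T ⟨le_top, ?_⟩ ?_ (hsq x)
  · intro y _ z hz
    refine ⟨?_, by rw [hT0 z hz]; exact zero_mem _⟩
    suffices T ≤ T.comap (mul y) from this hz
    refine Submodule.span_le.mpr ?_
    rintro _ ⟨x, rfl⟩
    change mul y (mul x x) ∈ T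
    have : mul y (mul x x) = mul (mul y x + x) (mul y x + x) - mul (mul y x) (mul y x)
        - mul x x := by
      rw [hleib]
      simp only [map_add, LinearMap.add_apply]
      abel
    rw [this]
    exact sub_mem (sub_mem (hsq _) (hsq _)) (hsq _)
  · refine ⟨1, ?_⟩
    rw [eq_bot_iff]
    refine (mulSub_le_iff mul).mpr fun x hx y _ => ?_
    rw [hT0 x hx]
    exact zero_mem _

/-- The multiplication induced on the quotient by an ideal. -/
noncomputable def quotMul (mul : A →ₗ[F] A →ₗ[F] A) (R : Submodule F A)
    (hR : IsIdealIn mul R ⊤) : (A ⧸ R) →ₗ[F] (A ⧸ R) →ₗ[F] (A ⧸ R) :=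
  R.liftQ
    { toFun := fun x => R.mapQ R (mul x) (fun y hy => (hR.2 x Submodule.mem_top y hy).1)
      map_add' := fun x y => by ext z; simp
      map_smul' := fun a x => by ext z; simp }
    (by
      intro x hx
      rw [LinearMap.mem_ker]
      ext z
      simpa using (hR.2 z Submodule.mem_top x hx).2)

lemma quotMul_mk (mul : A →ₗ[F] A →ₗ[F] A) (R : Submodule F A)
    (hR : IsIdealIn mul R ⊤) (x y : A) :
    quotMul mul R hR (R.mkQ x) (R.mkQ y) = R.mkQ (mul x y) := by
  simp [quotMul]

/-- The quotient by an ideal containing all squares is a Lie ring. -/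
@[reducible] noncomputable def quotLieRing (mul : A →ₗ[F] A →ₗ[F] A)
    (hleib : ∀ x y z : A, mul x (mul y z) = mul (mul x y) z + mul y (mul x z))
    (R : Submodule F A) (hR : IsIdealIn mul R ⊤) (hsq : ∀ x, mul x x ∈ R) :
    LieRing (A ⧸ R) where
  bracket x y := quotMul mul R hR x y
  add_lie x y z := LinearMap.map_add₂ (quotMul mul R hR) x y z
  lie_add x y z := map_add (quotMul mul R hR x) y z
  lie_self x := by
    obtain ⟨x, rfl⟩ := R.mkQ_surjective x
    change quotMul mul R hR _ _ = 0
    rw [quotMul_mk]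
    simpa using hsq x
  leibniz_lie x y z := by
    obtain ⟨x, rfl⟩ := R.mkQ_surjective x
    obtain ⟨y, rfl⟩ := R.mkQ_surjective y
    obtain ⟨z, rfl⟩ := R.mkQ_surjective z
    change quotMul mul R hR _ (quotMul mul R hR _ _) = quotMul mul R hR (quotMul mul R hR _ _) _
      + quotMul mul R hR _ (quotMul mul R hR _ _)
    simp only [quotMul_mk]
    rw [hleib, map_add]

end LeibnizProof

/-- over characteristic zero, `A² ∩ R = A·R + R·A` where
`R = rad(A)`. -/
theorem stmt_10 {F A : Type*} [Field F] [CharZero F]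
    [AddCommGroup A] [Module F A] [FiniteDimensional F A]
    (mul : A →ₗ[F] A →ₗ[F] A)
    (hleib : ∀ x y z : A, mul x (mul y z) = mul (mul x y) z + mul y (mul x z))
    (R : Submodule F A) (hR : IsRadicalIn mul ⊤ R) :
    mulSub mul ⊤ ⊤ ⊓ R = fSub mul ⊤ R := by
  have hid := hR.1
  refine le_antisymm ?_ (le_inf ?_ ?_)
  · have hsq := sq_mem_radical mul hleib R hR
    letI : LieRing (A ⧸ R) := quotLieRing mul hleib R hid hsq
    have hbr : ∀ x y : A, ⁅R.mkQ x, R.mkQ y⁆ = R.mkQ (mul x y) := quotMul_mk mul R hid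
    letI : LieAlgebra F (A ⧸ R) :=
      { lie_smul := fun t x y => (quotMul mul R hid x).map_smul t y }
    haveI : LieAlgebra.HasTrivialRadical F (A ⧸ R) := by
      rw [LieAlgebra.hasTrivialRadical_iff_no_abelian_ideals]
      intro I hI
      let T : Submodule F A := (I.toSubmodule).comap R.mkQ
      have hmT : ∀ x, x ∈ T ↔ R.mkQ x ∈ I := fun x => Iff.rfl
      have hT2 : mulSub mul T T ≤ R := by
        refine (mulSub_le_iff mul).mpr fun x hx y hy => ?_
        have h := hI.trivial ⟨R.mkQ x, hx⟩ ⟨R.mkQ y, hy⟩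
        have h' : ⁅R.mkQ x, R.mkQ y⁆ = 0 := congrArg Subtype.val h
        rw [hbr] at h'
        simpa using h'
      have hTR : T ≤ R := by
        refine hR.2.2 T ⟨le_top, fun x _ y hy => ⟨?_, ?_⟩⟩ ?_
        · rw [hmT, ← hbr]
          exact I.lie_mem hy
        · rw [hmT, ← hbr, ← lie_skew]
          exact neg_mem (I.lie_mem hy)
        · obtain ⟨n, hn⟩ := hR.2.1
          exact ⟨n + 1, eq_bot_iff.mpr (hn ▸ ds_mono_of_le mul hT2 n)⟩
      rw [eq_bot_iff]
      intro u hu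
      obtain ⟨x, rfl⟩ := R.mkQ_surjective u
      have : x ∈ R := hTR hu
      rw [LieSubmodule.mem_bot]
      simpa using this
    exact leibniz_core mul hleib R hid R.mkQ R.mkQ_surjective (fun x => by simp)
      (fun x y => (hbr x y).symm)
  · exact sup_le
      ((mulSub_le_iff mul).mpr fun x _ y _ => mul_mem_mulSub mul Submodule.mem_top Submodule.mem_top)
      ((mulSub_le_iff mul).mpr fun x _ y _ => mul_mem_mulSub mul Submodule.mem_top Submodule.mem_top)
  · exact sup_le
      ((mulSub_le_iff mul).mpr fun x hx y hy => (hid.2 x hx y hy).1)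
      ((mulSub_le_iff mul).mpr fun x hx y hy => (hid.2 y hy x hx).2)
end

section
/- Let A be a finite-dimensional left Leibniz algebra over a field F of characteristic zero, with radical R = rad(A) and nilradical N = nilrad(A). Then N = nilrad(R), the nilradical of the Leibniz algebra R. -/
open Submodule

section DerivationLemma

variable {F B : Type*} [Field F] [CharZero F] [Ring B] [Algebra F B]

/-- Elements `y` of `E` with `δ^i y ∈ J` for `i < k`. -/
def derFil (E J : Submodule F B) (δ : B →ₗ[F] B) : ℕ → Submodule F B
  | 0 => E
  | k + 1 => J ⊓ (derFil E J δ k).comap δ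

theorem derFil_le (E J : Submodule F B) (δ : B →ₗ[F] B) (hJE : J ≤ E) (k : ℕ) :
    derFil E J δ k ≤ E := by
  cases k with
  | zero => exact le_rfl
  | succ k => exact inf_le_left.trans hJE

theorem derFil_succ_le (E J : Submodule F B) (δ : B →ₗ[F] B) (hJE : J ≤ E) (k : ℕ) :
    derFil E J δ (k + 1) ≤ derFil E J δ k := by
  induction k with
  | zero => exact inf_le_left.trans hJE
  | succ k ih => exact inf_le_inf le_rfl (Submodule.comap_mono ih)

theorem derFil_mul (E J : Submodule F B) (δ : B →ₗ[F] B)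
    (hδ : ∀ x y, δ (x * y) = δ x * y + x * δ y)
    (hE : ∀ x ∈ E, ∀ y ∈ E, x * y ∈ E) (hJE : J ≤ E)
    (hEJ : ∀ x ∈ E, ∀ y ∈ J, x * y ∈ J) (hδE : ∀ x ∈ E, δ x ∈ E) (k : ℕ) :
    ∀ e ∈ E, ∀ y ∈ derFil E J δ k, e * y ∈ derFil E J δ k := by
  induction k with
  | zero => exact hE
  | succ k ih =>
    intro e he y hy
    refine ⟨hEJ e he y hy.1, ?_⟩
    change δ (e * y) ∈ derFil E J δ k
    rw [hδ]
    exact add_mem (ih _ (hδE e he) _ (derFil_succ_le E J δ hJE k hy)) (ih e he _ hy.2)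

theorem derFil_mul' (E J : Submodule F B) (δ : B →ₗ[F] B)
    (hδ : ∀ x y, δ (x * y) = δ x * y + x * δ y)
    (hE : ∀ x ∈ E, ∀ y ∈ E, x * y ∈ E) (hJE : J ≤ E)
    (hEJ : ∀ x ∈ E, ∀ y ∈ J, x * y ∈ J) (hJE' : ∀ x ∈ J, ∀ y ∈ E, x * y ∈ J)
    (hδE : ∀ x ∈ E, δ x ∈ E) (k : ℕ) :
    ∀ x ∈ J, ∀ y ∈ derFil E J δ k, x * y ∈ derFil E J δ (k + 1) := by
  induction k with
  | zero =>
    intro x hx y hy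
    exact ⟨hJE' x hx y hy, hδE _ (hE _ (hJE hx) _ hy)⟩
  | succ k ih =>
    intro x hx y hy
    refine ⟨hEJ x (hJE hx) y hy.1, ?_⟩
    change δ (x * y) ∈ derFil E J δ (k + 1)
    rw [hδ]
    exact add_mem (derFil_mul E J δ hδ hE hJE hEJ hδE (k + 1) _ (hδE x (hJE hx)) _ hy)
      (ih x hx _ hy.2)

theorem derFil_iter_mul (E J : Submodule F B) (δ : B →ₗ[F] B)
    (hδ : ∀ x y, δ (x * y) = δ x * y + x * δ y)
    (hE : ∀ x ∈ E, ∀ y ∈ E, x * y ∈ E) (hJE : J ≤ E)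
    (hEJ : ∀ x ∈ E, ∀ y ∈ J, x * y ∈ J) (hδE : ∀ x ∈ E, δ x ∈ E) (k : ℕ) :
    (∀ y ∈ derFil E J δ (k + 1), δ^[k] y ∈ J) ∧
    ∀ e ∈ E, ∀ y ∈ derFil E J δ k, δ^[k] (e * y) - e * δ^[k] y ∈ J := by
  induction k with
  | zero => exact ⟨fun y hy => hy.1, fun e _ y _ => by simp⟩
  | succ k ih =>
    refine ⟨fun y hy => ih.1 _ hy.2, fun e he y hy => ?_⟩
    simp only [Function.iterate_succ, Function.comp_apply, hδ, iterate_map_add]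
    have h1 := ih.1 _ (derFil_mul E J δ hδ hE hJE hEJ hδE (k + 1) _ (hδE e he) _ hy)
    have h2 := ih.2 e he _ hy.2
    rw [add_sub_assoc]
    exact add_mem h1 h2

theorem derFil_iter_mul' (E J : Submodule F B) (δ : B →ₗ[F] B)
    (hδ : ∀ x y, δ (x * y) = δ x * y + x * δ y)
    (hE : ∀ x ∈ E, ∀ y ∈ E, x * y ∈ E) (hJE : J ≤ E)
    (hEJ : ∀ x ∈ E, ∀ y ∈ J, x * y ∈ J) (hJE' : ∀ x ∈ J, ∀ y ∈ E, x * y ∈ J)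
    (hδE : ∀ x ∈ E, δ x ∈ E) (k : ℕ) :
    ∀ x ∈ J, ∀ y ∈ derFil E J δ k,
      δ^[k + 1] (x * y) - ((k + 1 : ℕ) : F) • (δ x * δ^[k] y) ∈ J := by
  induction k with
  | zero =>
    intro x hx y hy
    simpa [hδ] using hJE' x hx _ (hδE y hy)
  | succ k ih =>
    intro x hx y hy
    have h1 := (derFil_iter_mul E J δ hδ hE hJE hEJ hδE (k + 1)).2 _ (hδE x (hJE hx)) y hy
    have h2 := ih x hx _ hy.2
    rw [Function.iterate_succ_apply, hδ, iterate_map_add]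
    have : δ^[k + 1] (δ x * y) + δ^[k + 1] (x * δ y)
        - ((k + 1 + 1 : ℕ) : F) • (δ x * δ^[k + 1] y)
        = (δ^[k + 1] (δ x * y) - δ x * δ^[k + 1] y)
        + (δ^[k + 1] (x * δ y) - ((k + 1 : ℕ) : F) • (δ x * δ^[k] (δ y))) := by
      rw [← Function.iterate_succ_apply δ k y]
      push_cast
      rw [add_smul _ (1 : F), one_smul]
      abel
    rw [this]
    exact add_mem h1 h2

theorem der_pow_le (E J : Submodule F B) (δ : B →ₗ[F] B)
    (hδ : ∀ x y, δ (x * y) = δ x * y + x * δ y)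
    (hE : ∀ x ∈ E, ∀ y ∈ E, x * y ∈ E) (h1 : (1 : B) ∈ E) (hJE : J ≤ E)
    (hEJ : ∀ x ∈ E, ∀ y ∈ J, x * y ∈ J) (hJE' : ∀ x ∈ J, ∀ y ∈ E, x * y ∈ J)
    (hδE : ∀ x ∈ E, δ x ∈ E) (k : ℕ) :
    ∀ z ∈ (J.map δ) ^ k, ∃ y, y ∈ J ^ k ∧ y ∈ derFil E J δ k ∧ z - δ^[k] y ∈ J := by
  induction k with
  | zero =>
    intro z hz
    rw [pow_zero, Submodule.mem_one] at hz
    obtain ⟨c, rfl⟩ := hz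
    refine ⟨algebraMap F B c, ?_, ?_, by simp⟩
    · rw [pow_zero, Submodule.mem_one]; exact ⟨c, rfl⟩
    · rw [Algebra.algebraMap_eq_smul_one]; exact E.smul_mem c h1
  | succ k ih =>
    intro z hz
    rw [pow_succ'] at hz
    induction hz using Submodule.mul_induction_on' with
    | mem_mul_mem u hu v hv =>
      obtain ⟨x, hx, rfl⟩ := hu
      obtain ⟨y, hy1, hy2, hy3⟩ := ih v hv
      have hk : ((k + 1 : ℕ) : F) ≠ 0 := Nat.cast_ne_zero.mpr (Nat.succ_ne_zero k)
      refine ⟨((k + 1 : ℕ) : F)⁻¹ • (x * y), ?_, ?_, ?_⟩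
      · rw [pow_succ']
        exact Submodule.smul_mem _ _ (Submodule.mul_mem_mul hx hy1)
      · exact Submodule.smul_mem _ _
          (derFil_mul' E J δ hδ hE hJE hEJ hJE' hδE k x hx y hy2)
      · have a1 := derFil_iter_mul' E J δ hδ hE hJE hEJ hJE' hδE k x hx y hy2
        have a2 := hEJ _ (hδE x (hJE hx)) _ hy3
        have a3 := J.smul_mem (((k + 1 : ℕ) : F)⁻¹) a1
        have : δ^[k + 1] (((k + 1 : ℕ) : F)⁻¹ • (x * y))
            = ((k + 1 : ℕ) : F)⁻¹ • δ^[k + 1] (x * y) := by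
          rw [← Module.End.pow_apply, map_smul, Module.End.pow_apply]
        rw [this]
        rw [smul_sub, inv_smul_smul₀ hk] at a3
        have := sub_mem a2 a3
        rw [mul_sub] at this
        convert this using 1
        abel
    | add u hu v hv iu iv =>
      obtain ⟨y, a1, a2, a3⟩ := iu
      obtain ⟨y', b1, b2, b3⟩ := iv
      refine ⟨y + y', add_mem a1 b1, add_mem a2 b2, ?_⟩
      rw [iterate_map_add, add_sub_add_comm]
      exact add_mem a3 b3

theorem der_nilp (E J : Submodule F B) (δ : B →ₗ[F] B)
    (hδ : ∀ x y, δ (x * y) = δ x * y + x * δ y)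
    (hE : ∀ x ∈ E, ∀ y ∈ E, x * y ∈ E) (h1 : (1 : B) ∈ E) (hJE : J ≤ E)
    (hEJ : ∀ x ∈ E, ∀ y ∈ J, x * y ∈ J) (hJE' : ∀ x ∈ J, ∀ y ∈ E, x * y ∈ J)
    (hδE : ∀ x ∈ E, δ x ∈ E) (n : ℕ) (hn : J ^ n = ⊥) :
    (J ⊔ J.map δ) ^ (n * n) = ⊥ := by
  have hD : (J.map δ) ^ n ≤ J := by
    intro z hz
    obtain ⟨y, hy, -, h⟩ := der_pow_le E J δ hδ hE h1 hJE hEJ hJE' hδE n z hz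
    rw [hn, Submodule.mem_bot] at hy
    subst hy
    rw [← Module.End.pow_apply, map_zero, sub_zero] at h
    exact h
  have hmap : J.map δ ≤ E := by
    rintro _ ⟨x, hx, rfl⟩
    exact hδE x (hJE hx)
  have hpow : ∀ k, (J.map δ) ^ k ≤ E := by
    intro k
    induction k with
    | zero =>
      rw [pow_zero, Submodule.one_le]; exact h1
    | succ k ih =>
      rw [pow_succ', Submodule.mul_le]
      exact fun x hx y hy => hE x (hmap hx) y (ih hy)
  have hK : ∀ k, (J ⊔ J.map δ) ^ k ≤ (J.map δ) ^ k ⊔ J := by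
    intro k
    induction k with
    | zero => simp
    | succ k ih =>
      rw [pow_succ']
      refine (mul_le_mul' le_rfl ih).trans ?_
      rw [Submodule.sup_mul, Submodule.mul_sup, Submodule.mul_sup]
      refine sup_le (sup_le ?_ ?_) (sup_le ?_ ?_)
      · exact (Submodule.mul_le.mpr fun x hx y hy => hJE' x hx y (hpow k hy)).trans le_sup_right
      · exact (Submodule.mul_le.mpr fun x hx y hy => hJE' x hx y (hJE hy)).trans le_sup_right
      · rw [← pow_succ']; exact le_sup_left
      · exact (Submodule.mul_le.mpr fun x hx y hy => hEJ x (hmap hx) y hy).trans le_sup_right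
  have hKn : (J ⊔ J.map δ) ^ n ≤ J := (hK n).trans (sup_le hD le_rfl)
  rw [pow_mul, eq_bot_iff, ← hn]
  exact pow_le_pow_left' hKn n

end DerivationLemma

section LeibnizLemmas

variable {F A : Type*} [Field F] [AddCommGroup A] [Module F A]

theorem lcs_le_of_pow (mul : A →ₗ[F] A →ₗ[F] A) (T : Submodule F A) (k : ℕ) :
    ∀ z ∈ lcs mul T k, z ∈ Submodule.span F {w | ∃ φ ∈ (T.map mul : Submodule F (Module.End F A)) ^ k,
      ∃ t : A, φ t = w} := by
  induction k with
  | zero =>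
    intro z _
    exact Submodule.subset_span ⟨1, by rw [pow_zero]; exact Submodule.one_le.mp le_rfl, z, rfl⟩
  | succ k ih =>
    suffices lcs mul T (k + 1) ≤ _ from this
    refine Submodule.span_le.mpr ?_
    rintro _ ⟨b, hb, c, hc, rfl⟩
    have := ih c hc
    suffices h : Submodule.span F {w | ∃ φ ∈ (T.map mul : Submodule F (Module.End F A)) ^ k,
      ∃ t : A, φ t = w} ≤ (Submodule.span F {w | ∃ φ ∈ (T.map mul : Submodule F (Module.End F A)) ^ (k + 1),
      ∃ t : A, φ t = w}).comap (mul b) from h this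
    refine Submodule.span_le.mpr ?_
    rintro _ ⟨φ, hφ, t, rfl⟩
    refine Submodule.subset_span ⟨(mul b : Module.End F A) * φ, ?_, t, rfl⟩
    rw [pow_succ']
    exact Submodule.mul_mem_mul (Submodule.mem_map_of_mem hb) hφ

theorem nilp_of_pow (mul : A →ₗ[F] A →ₗ[F] A) (T : Submodule F A) (k : ℕ)
    (h : (T.map mul : Submodule F (Module.End F A)) ^ k = ⊥) : IsNilpotentSub mul T := by
  refine ⟨k, eq_bot_iff.mpr fun z hz => ?_⟩
  have := lcs_le_of_pow mul T k z hz
  rw [h] at this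
  refine (Submodule.span_le.mpr ?_ : _ ≤ (⊥ : Submodule F A)) this
  rintro _ ⟨φ, hφ, t, rfl⟩
  rw [Submodule.mem_bot] at hφ
  simp [hφ]

theorem pow_apply_mem_lcs (mul : A →ₗ[F] A →ₗ[F] A) (T : Submodule F A) (k : ℕ) :
    ∀ φ ∈ (T.map mul : Submodule F (Module.End F A)) ^ k, ∀ t ∈ T, φ t ∈ lcs mul T k := by
  induction k with
  | zero =>
    intro φ hφ t ht
    rw [pow_zero, Submodule.mem_one] at hφ
    obtain ⟨c, rfl⟩ := hφ
    exact T.smul_mem c ht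
  | succ k ih =>
    intro φ hφ t ht
    rw [pow_succ'] at hφ
    induction hφ using Submodule.mul_induction_on' with
    | mem_mul_mem u hu v hv =>
      obtain ⟨b, hb, rfl⟩ := hu
      exact Submodule.subset_span ⟨b, hb, v t, ih v hv t ht, rfl⟩
    | add u hu v hv iu iv => exact add_mem iu iv

theorem pow_of_nilp (mul : A →ₗ[F] A →ₗ[F] A) (R T : Submodule F A)
    (hR : IsIdealIn mul R ⊤) (hT : IsIdealIn mul T R) (h : IsNilpotentSub mul T) :
    ∃ k, (T.map mul : Submodule F (Module.End F A)) ^ k = ⊥ := by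
  obtain ⟨m, hm⟩ := h
  refine ⟨m + 1 + 1, eq_bot_iff.mpr ?_⟩
  rw [pow_succ, pow_succ, mul_assoc, Submodule.mul_le]
  intro φ hφ ψ hψ
  have key : ∀ x, ψ x ∈ T := by
    induction hψ using Submodule.mul_induction_on' with
    | mem_mul_mem u hu v hv =>
      obtain ⟨b, hb, rfl⟩ := hu
      obtain ⟨c, hc, rfl⟩ := hv
      intro x
      exact (hT.2 _ (hR.2 x trivial c (hT.1 hc)).2 b hb).2
    | add u hu v hv iu iv => exact fun x => add_mem (iu x) (iv x)
  rw [Submodule.mem_bot]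
  ext x
  have := pow_apply_mem_lcs mul T m φ hφ _ (key x)
  rw [hm, Submodule.mem_bot] at this
  exact this

theorem step_nilp [CharZero F] (mul : A →ₗ[F] A →ₗ[F] A)
    (hleib : ∀ x y z : A, mul x (mul y z) = mul (mul x y) z + mul y (mul x z))
    (R T : Submodule F A)
    (hR : IsIdealIn mul R ⊤) (hT : IsIdealIn mul T R) (h : IsNilpotentSub mul T) (a : A) :
    IsIdealIn mul (T ⊔ T.map (mul a)) R ∧ IsNilpotentSub mul (T ⊔ T.map (mul a)) := by
  have hL : ∀ x y, (mul (mul x y) : Module.End F A)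
      = (mul x : Module.End F A) * (mul y : Module.End F A)
        - (mul y : Module.End F A) * (mul x : Module.End F A) := by
    intro x y
    ext z
    simp [hleib x y z]
  constructor
  · refine ⟨sup_le hT.1 ?_, ?_⟩
    · rintro _ ⟨t, ht, rfl⟩
      exact (hR.2 a trivial t (hT.1 ht)).1
    · intro r hr y hy
      obtain ⟨t, ht, _, ⟨s, hs, rfl⟩, rfl⟩ := Submodule.mem_sup.mp hy
      have hra := hR.2 a trivial r hr
      constructor
      · rw [map_add, hleib r a s]
        refine add_mem (Submodule.mem_sup_left (hT.2 r hr t ht).1) (add_mem ?_ ?_)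
        · exact Submodule.mem_sup_left (hT.2 _ hra.2 s hs).1
        · exact Submodule.mem_sup_right (Submodule.mem_map_of_mem (hT.2 r hr s hs).1)
      · rw [map_add, LinearMap.add_apply,
          show mul (mul a s) r = mul a (mul s r) - mul s (mul a r) by rw [hleib a s r]; abel]
        refine add_mem (Submodule.mem_sup_left (hT.2 r hr t ht).2) (sub_mem ?_ ?_)
        · exact Submodule.mem_sup_right (Submodule.mem_map_of_mem (hT.2 r hr s hs).2)
        · exact Submodule.mem_sup_left (hT.2 _ hra.1 s hs).2
  · obtain ⟨n, hn⟩ := pow_of_nilp mul R T hR hT h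
    let S : Subalgebra F (Module.End F A) :=
      Algebra.adjoin F ((R.map mul : Submodule F (Module.End F A)) : Set (Module.End F A))
    let E : Submodule F (Module.End F A) := Subalgebra.toSubmodule S
    let P : Submodule F (Module.End F A) := T.map mul
    let J : Submodule F (Module.End F A) := P * E
    let δ : Module.End F A →ₗ[F] Module.End F A :=
      LinearMap.mulLeft F (mul a : Module.End F A) - LinearMap.mulRight F (mul a : Module.End F A)
    have hδa : ∀ x, δ x = (mul a : Module.End F A) * x - x * (mul a : Module.End F A) :=
      fun x => rfl
    have hδ : ∀ x y, δ (x * y) = δ x * y + x * δ y := by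
      intro x y
      simp only [hδa]
      noncomm_ring
    have hE : ∀ x ∈ E, ∀ y ∈ E, x * y ∈ E := fun x hx y hy => S.mul_mem hx hy
    have h1 : (1 : Module.End F A) ∈ E := S.one_mem
    have hEE : E * E ≤ E := Submodule.mul_le.mpr hE
    have hRE : ∀ r ∈ R, (mul r : Module.End F A) ∈ E := fun r hr =>
      Algebra.subset_adjoin (Submodule.mem_map_of_mem hr)
    have hPE : P ≤ E := by
      rintro _ ⟨t, ht, rfl⟩
      exact hRE t (hT.1 ht)
    have hJE : J ≤ E := (mul_le_mul' hPE le_rfl).trans hEE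
    have hPJ : P ≤ J := fun p hp => by
      have := Submodule.mul_mem_mul hp h1
      rwa [mul_one] at this
    have hJE' : ∀ x ∈ J, ∀ y ∈ E, x * y ∈ J := by
      intro x hx y hy
      have : x * y ∈ P * E * E := Submodule.mul_mem_mul hx hy
      rw [mul_assoc] at this
      exact mul_le_mul' le_rfl hEE this
    have hEP : ∀ e ∈ E, ∀ p ∈ P, e * p ∈ J := by
      intro e he
      change e ∈ Algebra.adjoin F _ at he
      induction he using Algebra.adjoin_induction with
      | mem x hx =>
        obtain ⟨r, hr, rfl⟩ := hx
        rintro _ ⟨t, ht, rfl⟩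
        have e1 : (mul r : Module.End F A) * (mul t : Module.End F A)
            = mul (mul r t) + (mul t : Module.End F A) * (mul r : Module.End F A) := by
          rw [hL]; abel
        rw [e1]
        exact add_mem (hPJ (Submodule.mem_map_of_mem (hT.2 r hr t ht).1))
          (Submodule.mul_mem_mul (Submodule.mem_map_of_mem ht) (hRE r hr))
      | algebraMap c =>
        intro p hp
        rw [← Algebra.smul_def]
        exact J.smul_mem c (hPJ hp)
      | add x y _ _ ix iy =>
        intro p hp
        rw [add_mul]
        exact add_mem (ix p hp) (iy p hp)
      | mul x y _ _ ix iy =>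
        intro p hp
        rw [mul_assoc]
        have := iy p hp
        generalize y * p = w at this
        induction this using Submodule.mul_induction_on' with
        | mem_mul_mem u hu v hv =>
          rw [← mul_assoc]
          exact hJE' _ (ix u hu) _ hv
        | add u hu v hv iu iv => rw [mul_add]; exact add_mem iu iv
    have hEPle : E * P ≤ J := Submodule.mul_le.mpr hEP
    have hEJ : ∀ x ∈ E, ∀ y ∈ J, x * y ∈ J := by
      intro x hx y hy
      have : x * y ∈ E * (P * E) := Submodule.mul_mem_mul hx hy
      rw [← mul_assoc] at this
      exact Submodule.mul_le.mpr hJE' (mul_le_mul' hEPle le_rfl this)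
    have hδE : ∀ x ∈ E, δ x ∈ E := by
      intro e he
      change e ∈ Algebra.adjoin F _ at he
      induction he using Algebra.adjoin_induction with
      | mem x hx =>
        obtain ⟨r, hr, rfl⟩ := hx
        rw [hδa, ← hL]
        exact hRE _ (hR.2 a trivial r hr).1
      | algebraMap c =>
        rw [hδa, ← Algebra.commutes, sub_self]
        exact E.zero_mem
      | add x y _ _ ix iy =>
        rw [map_add]
        exact add_mem ix iy
      | mul x y hx hy ix iy =>
        rw [hδ]
        exact add_mem (hE _ ix _ hy) (hE _ hx _ iy)
    have hJpow : ∀ k, J ^ k ≤ P ^ k * E := by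
      intro k
      induction k with
      | zero =>
        rw [pow_zero, pow_zero, one_mul]
        exact Submodule.one_le.mpr h1
      | succ k ih =>
        calc J ^ (k + 1) = J ^ k * J := pow_succ _ _
          _ ≤ P ^ k * E * J := mul_le_mul' ih le_rfl
          _ = P ^ k * (E * J) := mul_assoc _ _ _
          _ ≤ P ^ k * J := mul_le_mul' le_rfl (Submodule.mul_le.mpr hEJ)
          _ = P ^ (k + 1) * E := by rw [pow_succ, mul_assoc]
    have hJn : J ^ n = ⊥ := by
      rw [eq_bot_iff]
      refine (hJpow n).trans ?_
      rw [show P ^ n = ⊥ from hn, Submodule.bot_mul]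
    have := der_nilp E J δ hδ hE h1 hJE hEJ hJE' hδE n hJn
    refine nilp_of_pow mul _ (n * n) (eq_bot_iff.mpr ?_)
    rw [← this]
    refine pow_le_pow_left' ?_ _
    rw [Submodule.map_sup]
    refine sup_le (hPJ.trans le_sup_left) (le_trans ?_ le_sup_right)
    rintro _ ⟨_, ⟨t, ht, rfl⟩, rfl⟩
    refine ⟨mul t, hPJ (Submodule.mem_map_of_mem ht), ?_⟩
    rw [hδa, hL]

theorem ds_le_lcs (mul : A →ₗ[F] A →ₗ[F] A) (N : Submodule F A) (hN : IsSubalg mul N) (k : ℕ) :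
    ds mul N k ≤ N ∧ ds mul N k ≤ lcs mul N k := by
  induction k with
  | zero => exact ⟨le_rfl, le_rfl⟩
  | succ k ih =>
    constructor
    · refine Submodule.span_le.mpr ?_
      rintro _ ⟨b, hb, c, hc, rfl⟩
      exact hN b (ih.1 hb) c (ih.1 hc)
    · refine Submodule.span_mono ?_
      rintro _ ⟨b, hb, c, hc, rfl⟩
      exact ⟨b, ih.1 hb, c, ih.2 hc, rfl⟩

end LeibnizLemmas

/-- over characteristic zero, `nilrad(A) = nilrad(rad(A))`. -/
theorem stmt_11 {F A : Type*} [Field F] [CharZero F]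
    [AddCommGroup A] [Module F A] [FiniteDimensional F A]
    (mul : A →ₗ[F] A →ₗ[F] A)
    (hleib : ∀ x y z : A, mul x (mul y z) = mul (mul x y) z + mul y (mul x z))
    (R N : Submodule F A)
    (hR : IsRadicalIn mul ⊤ R) (hN : IsNilradicalIn mul ⊤ N) :
    IsNilradicalIn mul R N := by
  have hNR : N ≤ R := by
    refine hR.2.2 N hN.1 ?_
    obtain ⟨m, hm⟩ := hN.2.1
    refine ⟨m, eq_bot_iff.mpr ?_⟩
    rw [← hm]
    exact (ds_le_lcs mul N (fun x _ y hy => (hN.1.2 x trivial y hy).1) m).2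
  refine ⟨⟨hNR, fun x _ y hy => hN.1.2 x trivial y hy⟩, hN.2.1, ?_⟩
  intro T hT hTn
  obtain ⟨M, hTM, hM⟩ := exists_maximal_ge_of_wellFoundedGT
    (fun M : Submodule F A => IsIdealIn mul M R ∧ IsNilpotentSub mul M) T ⟨hT, hTn⟩
  have hstab : ∀ a, ∀ t ∈ M, mul a t ∈ M := by
    intro a t ht
    have h := step_nilp mul hleib R M hR.1 hM.prop.1 hM.prop.2 a
    exact hM.le_of_ge h le_sup_left (Submodule.mem_sup_right (Submodule.mem_map_of_mem ht))
  refine hTM.trans (le_sup_left.trans (hN.2.2 (M ⊔ LinearMap.ker mul) ?_ ?_))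
  · refine ⟨le_top, fun x _ y hy => ?_⟩
    obtain ⟨t, ht, c, hc, rfl⟩ := Submodule.mem_sup.mp hy
    rw [LinearMap.mem_ker] at hc
    have hxc : mul x c ∈ LinearMap.ker mul := by
      rw [LinearMap.mem_ker]
      ext z
      have := hleib x c z
      simp only [hc, LinearMap.zero_apply, map_zero, add_zero] at this
      exact this.symm
    have htx : mul t x + mul x t ∈ LinearMap.ker mul := by
      rw [LinearMap.mem_ker]
      ext z
      rw [map_add, LinearMap.add_apply, LinearMap.zero_apply]
      have e3 : mul (mul t x) z + mul (mul x t) z + mul x (mul t z) = mul x (mul t z) := by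
        conv_rhs => rw [hleib x t z, hleib t x z]
        abel
      exact add_eq_right.mp e3
    constructor
    · rw [map_add]
      exact add_mem (Submodule.mem_sup_left (hstab x t ht)) (Submodule.mem_sup_right hxc)
    · rw [map_add, LinearMap.add_apply, hc, LinearMap.zero_apply, add_zero,
        show mul t x = (mul t x + mul x t) - mul x t by abel]
      exact sub_mem (Submodule.mem_sup_right htx) (Submodule.mem_sup_left (hstab x t ht))
  · obtain ⟨k, hk⟩ := pow_of_nilp mul R M hR.1 hM.prop.1 hM.prop.2
    refine nilp_of_pow mul _ k ?_
    rw [Submodule.map_sup, LinearMap.le_ker_iff_map.mp (le_refl (LinearMap.ker mul)), sup_bot_eq]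
    exact hk
end

section
/- Let A be a finite-dimensional left Leibniz algebra over a field F of characteristic zero and let S be a solvable subinvariant subalgebra of A. Then S ⊆ rad(A). -/
open Submodule

section LeibnizAux

variable {F : Type*} {A : Type*} [Field F] [AddCommGroup A] [Module F A]

theorem aux_mulSub_le {mul : A →ₗ[F] A →ₗ[F] A} {B C E : Submodule F A}
    (h : ∀ b ∈ B, ∀ c ∈ C, mul b c ∈ E) : mulSub mul B C ≤ E := by
  refine Submodule.span_le.2 ?_
  rintro z ⟨b, hb, c, hc, rfl⟩
  exact h b hb c hc

theorem aux_mem_mulSub {mul : A →ₗ[F] A →ₗ[F] A} {B C : Submodule F A} {b c : A}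
    (hb : b ∈ B) (hc : c ∈ C) : mul b c ∈ mulSub mul B C :=
  Submodule.subset_span ⟨b, hb, c, hc, rfl⟩

theorem aux_ds_mono {mul : A →ₗ[F] A →ₗ[F] A} {B C : Submodule F A} (h : B ≤ C) (n : ℕ) :
    ds mul B n ≤ ds mul C n := by
  induction n with
  | zero => exact h
  | succ n ih => exact aux_mulSub_le fun b hb c hc => aux_mem_mulSub (ih hb) (ih hc)

theorem aux_ds_add {mul : A →ₗ[F] A →ₗ[F] A} (B : Submodule F A) (n m : ℕ) :
    ds mul B (n + m) = ds mul (ds mul B n) m := by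
  induction m with
  | zero => rfl
  | succ m ih =>
    show mulSub mul (ds mul B (n + m)) (ds mul B (n + m)) = _
    rw [ih]; rfl

theorem aux_solvable_ext {mul : A →ₗ[F] A →ₗ[F] A} {B C : Submodule F A} {n : ℕ}
    (h : ds mul B n ≤ C) (hC : IsSolvableSub mul C) : IsSolvableSub mul B := by
  obtain ⟨m, hm⟩ := hC
  refine ⟨n + m, ?_⟩
  rw [aux_ds_add, eq_bot_iff, ← hm]
  exact aux_ds_mono h m

/-- Leibniz rule for iterates of a derivation. -/
theorem aux_leibniz {mul : A →ₗ[F] A →ₗ[F] A} {D : A →ₗ[F] A}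
    (hD : ∀ y z, D (mul y z) = mul (D y) z + mul y (D z)) (n : ℕ) (y z : A) :
    (D ^ n) (mul y z) = ∑ p ∈ Finset.HasAntidiagonal.antidiagonal n,
      (n.choose p.1 : F) • mul ((D ^ p.1) y) ((D ^ p.2) z) := by
  induction n generalizing y z with
  | zero => simp
  | succ n ih =>
    have e : ∀ (k : ℕ) (w : A), (D ^ k) (D w) = (D ^ (k + 1)) w := fun k w => by
      rw [pow_succ]; rfl
    rw [← e, hD, map_add, ih, ih]
    simp only [e]
    have key := Finset.sum_antidiagonal_choose_succ_nsmul
      (fun i j => mul ((D ^ i) y) ((D ^ j) z)) n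
    simp only [Nat.cast_smul_eq_nsmul]
    rw [key, add_comm]
    congr 1
    refine Finset.sum_congr rfl fun p hp => ?_
    rw [Nat.choose_symm_of_eq_add (Finset.HasAntidiagonal.mem_antidiagonal.1 hp).symm]

/-- The pairing between words in `J` and words in `J + DJ`. -/
theorem aux_word {mul : A →ₗ[F] A →ₗ[F] A} {D : A →ₗ[F] A} {I J : Submodule F A}
    (hD : ∀ y z, D (mul y z) = mul (D y) z + mul y (D z))
    (hJ : IsIdealIn mul J I) (hDI : ∀ y ∈ I, D y ∈ I) (hI : IsSubalg mul I) (n : ℕ) :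
    ∀ v ∈ ds mul (J ⊔ J.map D) n, v ∈ I ∧ ∃ w ∈ ds mul J n, w ∈ J ∧
      (∀ i < 2 ^ n, (D ^ i) w ∈ J) ∧
      (D ^ (2 ^ n)) w - ((2 ^ n).factorial : F) • v ∈ J := by
  have hpow : ∀ (k : ℕ) (y : A), y ∈ I → (D ^ k) y ∈ I := by
    intro k
    induction k with
    | zero => intro y hy; simpa using hy
    | succ k ih => intro y hy; rw [pow_succ]; exact ih _ (hDI y hy)
  induction n with
  | zero =>
    intro v hv
    obtain ⟨a, ha, b, hb, rfl⟩ := Submodule.mem_sup.1 hv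
    obtain ⟨x, hx, rfl⟩ := hb
    refine ⟨I.add_mem (hJ.1 ha) (hDI _ (hJ.1 hx)), x, hx, hx, ?_, ?_⟩
    · intro i hi
      have : i = 0 := by simpa using hi
      subst this; simpa using hx
    · simpa using ha
  | succ n ih =>
    intro v hv
    refine Submodule.span_induction (p := fun v _ => v ∈ I ∧ ∃ w ∈ ds mul J (n + 1), w ∈ J ∧
      (∀ i < 2 ^ (n + 1), (D ^ i) w ∈ J) ∧
      (D ^ (2 ^ (n + 1))) w - ((2 ^ (n + 1)).factorial : F) • v ∈ J) ?_ ?_ ?_ ?_ hv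
    · rintro v ⟨v₁, hv₁, v₂, hv₂, rfl⟩
      obtain ⟨hi₁, w₁, hw₁, hj₁, hlt₁, heq₁⟩ := ih v₁ hv₁
      obtain ⟨hi₂, w₂, hw₂, hj₂, hlt₂, heq₂⟩ := ih v₂ hv₂
      have hterm : ∀ p q : ℕ, p < 2 ^ n ∨ q < 2 ^ n →
          mul ((D ^ p) w₁) ((D ^ q) w₂) ∈ J := by
        rintro p q (h | h)
        · exact (hJ.2 _ (hpow q _ (hJ.1 hj₂)) _ (hlt₁ p h)).2
        · exact (hJ.2 _ (hpow p _ (hJ.1 hj₁)) _ (hlt₂ q h)).1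
      refine ⟨hI _ hi₁ _ hi₂, mul w₁ w₂, aux_mem_mulSub hw₁ hw₂,
        (hJ.2 _ (hJ.1 hj₁) _ hj₂).1, ?_, ?_⟩
      · intro i hi
        rw [aux_leibniz hD]
        refine J.sum_mem fun p hp => J.smul_mem _ (hterm _ _ ?_)
        have := Finset.HasAntidiagonal.mem_antidiagonal.1 hp
        rw [pow_succ] at hi
        omega
      · rw [aux_leibniz hD]
        have hmem : ((2 ^ n, 2 ^ n) : ℕ × ℕ) ∈ Finset.HasAntidiagonal.antidiagonal (2 ^ (n + 1)) := by
          rw [Finset.HasAntidiagonal.mem_antidiagonal, pow_succ]; ring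
        rw [← Finset.add_sum_erase _ _ hmem, add_sub_right_comm]
        refine J.add_mem ?_ (J.sum_mem fun p hp => J.smul_mem _ (hterm _ _ ?_))
        · have hc : ((2 ^ (n + 1)).factorial : F) =
              ((2 ^ (n + 1)).choose (2 ^ n) : F) *
                (((2 ^ n).factorial : F) * ((2 ^ n).factorial : F)) := by
            have h := Nat.choose_mul_factorial_mul_factorial
              (n := 2 ^ (n + 1)) (k := 2 ^ n) (by rw [pow_succ]; omega)
            rw [show 2 ^ (n + 1) - 2 ^ n = 2 ^ n by rw [pow_succ]; omega] at h
            rw [← h]; push_cast; ring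
          dsimp only
          rw [hc, mul_smul, ← smul_sub]
          refine J.smul_mem _ ?_
          set c : F := ((2 ^ n).factorial : F)
          have e : mul ((D ^ (2 ^ n)) w₁) ((D ^ (2 ^ n)) w₂) - (c * c) • mul v₁ v₂ =
              mul ((D ^ (2 ^ n)) w₁ - c • v₁) ((D ^ (2 ^ n)) w₂) +
                mul (c • v₁) ((D ^ (2 ^ n)) w₂ - c • v₂) := by
            simp [mul_smul, smul_sub]
          rw [e]
          exact J.add_mem (hJ.2 _ (hpow _ _ (hJ.1 hj₂)) _ heq₁).2
            (hJ.2 _ (I.smul_mem _ hi₁) _ heq₂).1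
        · obtain ⟨hne, hp⟩ := Finset.mem_erase.1 hp
          have h := Finset.HasAntidiagonal.mem_antidiagonal.1 hp
          rw [pow_succ] at h
          by_contra hcon
          push Not at hcon
          exact hne (Prod.ext (by dsimp only; omega) (by dsimp only; omega))
    · exact ⟨I.zero_mem, 0, Submodule.zero_mem _, J.zero_mem, by simp, by simp⟩
    · rintro x y - - ⟨hx, w, h1, h2, h3, h4⟩ ⟨hy, w', h1', h2', h3', h4'⟩
      refine ⟨I.add_mem hx hy, w + w', Submodule.add_mem _ h1 h1', J.add_mem h2 h2', ?_, ?_⟩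
      · intro i hi
        rw [map_add]; exact J.add_mem (h3 i hi) (h3' i hi)
      · rw [map_add, smul_add, add_sub_add_comm]; exact J.add_mem h4 h4'
    · rintro a x - ⟨hx, w, h1, h2, h3, h4⟩
      refine ⟨I.smul_mem _ hx, a • w, Submodule.smul_mem _ _ h1, J.smul_mem _ h2, ?_, ?_⟩
      · intro i hi
        rw [map_smul]; exact J.smul_mem _ (h3 i hi)
      · rw [map_smul, smul_comm, ← smul_sub]; exact J.smul_mem _ h4

theorem aux_step [CharZero F] [FiniteDimensional F A] {mul : A →ₗ[F] A →ₗ[F] A}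
    (hleib : ∀ x y z : A, mul x (mul y z) = mul (mul x y) z + mul y (mul x z))
    {I B S : Submodule F A} (hI : IsSubalg mul I) (hIB : IsIdealIn mul I B)
    (h : ∃ T, S ≤ T ∧ IsIdealIn mul T I ∧ IsSolvableSub mul T) :
    ∃ T, S ≤ T ∧ IsIdealIn mul T B ∧ IsSolvableSub mul T := by
  obtain ⟨T, ⟨hST, hTI, hTs⟩, hmax⟩ := WellFounded.has_min
    (wellFounded_gt : WellFounded ((· > ·) : Submodule F A → Submodule F A → Prop))
    {T | S ≤ T ∧ IsIdealIn mul T I ∧ IsSolvableSub mul T} h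
  have hmax' : ∀ T', T ≤ T' → IsIdealIn mul T' I → IsSolvableSub mul T' → T' ≤ T := by
    intro T' h1 h2 h3
    by_contra hn
    exact hmax T' ⟨hST.trans h1, h2, h3⟩ (lt_of_le_not_ge h1 hn)
  -- stability under left multiplications
  have hleft : ∀ x ∈ B, ∀ y ∈ T, mul x y ∈ T := by
    intro x hx y hy
    have hDI : ∀ y ∈ I, mul x y ∈ I := fun y hy => (hIB.2 x hx y hy).1
    have hsub : T ⊔ T.map (mul x) ≤ T := by
      refine hmax' _ le_sup_left ⟨?_, ?_⟩ ?_
      · refine sup_le hTI.1 ?_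
        rintro _ ⟨z, hz, rfl⟩
        exact hDI z (hTI.1 hz)
      · intro z hz w hw
        obtain ⟨a, ha, b, ⟨c, hc, rfl⟩, rfl⟩ := Submodule.mem_sup.1 hw
        have hinl : ∀ {u}, u ∈ T → u ∈ T ⊔ T.map (mul x) := fun hu => Submodule.mem_sup_left hu
        have hinr : ∀ {u}, u ∈ T → mul x u ∈ T ⊔ T.map (mul x) :=
          fun hu => Submodule.mem_sup_right ⟨_, hu, rfl⟩
        have e1 : mul z (mul x c) = mul x (mul z c) - mul (mul x z) c := by
          rw [hleib x z c]; abel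
        have e2 : mul (mul x c) z = mul x (mul c z) - mul c (mul x z) := by
          rw [hleib x c z]; abel
        constructor
        · rw [map_add, e1]
          exact Submodule.add_mem _ (hinl (hTI.2 z hz a ha).1)
            (Submodule.sub_mem _ (hinr (hTI.2 z hz c hc).1)
              (hinl (hTI.2 _ (hDI z hz) c hc).1))
        · rw [map_add, LinearMap.add_apply, e2]
          exact Submodule.add_mem _ (hinl (hTI.2 z hz a ha).2)
            (Submodule.sub_mem _ (hinr (hTI.2 z hz c hc).2)
              (hinl (hTI.2 _ (hDI z hz) c hc).2))
      · obtain ⟨n, hn⟩ := hTs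
        refine aux_solvable_ext (n := n) (C := T) ?_ ⟨n, hn⟩
        intro v hv
        obtain ⟨-, w, hw, -, -, h4⟩ :=
          aux_word (D := mul x) (fun y z => hleib x y z) hTI hDI hI n v hv
        rw [hn, Submodule.mem_bot] at hw
        subst hw
        rw [map_zero, zero_sub, Submodule.neg_mem_iff] at h4
        exact (Submodule.smul_mem_iff _ (Nat.cast_ne_zero.2 (Nat.factorial_ne_zero _))).1 h4
    exact hsub (Submodule.mem_sup_right ⟨y, hy, rfl⟩)
  -- the left annihilator
  have hU : I ⊓ LinearMap.ker mul ≤ T := by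
    refine le_sup_right.trans (hmax' (T ⊔ I ⊓ LinearMap.ker mul) le_sup_left
      ⟨sup_le hTI.1 inf_le_left, ?_⟩ ?_)
    · intro z hz w hw
      obtain ⟨a, ha, b, ⟨hbI, hbU⟩, rfl⟩ := Submodule.mem_sup.1 hw
      have hb0 : mul b = 0 := LinearMap.mem_ker.1 hbU
      constructor
      · rw [map_add]
        refine Submodule.add_mem_sup (hTI.2 z hz a ha).1 ⟨hI z hz b hbI, ?_⟩
        refine LinearMap.mem_ker.2 (LinearMap.ext fun u => ?_)
        have := hleib z b u
        simpa [hb0] using this.symm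
      · rw [map_add, hb0, add_zero]
        exact Submodule.mem_sup_left (hTI.2 z hz a ha).2
    · refine aux_solvable_ext (n := 1) (C := T) ?_ hTs
      refine aux_mulSub_le ?_
      intro w hw w' hw'
      obtain ⟨a, ha, b, ⟨hbI, hbU⟩, rfl⟩ := Submodule.mem_sup.1 hw
      have hb0 : mul b = 0 := LinearMap.mem_ker.1 hbU
      have hw'I : w' ∈ I := (sup_le hTI.1 inf_le_left :
        T ⊔ I ⊓ LinearMap.ker mul ≤ I) hw'
      rw [map_add, hb0, add_zero]
      exact (hTI.2 _ hw'I a ha).2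
  refine ⟨T, hST, ⟨hTI.1.trans hIB.1, fun x hx y hy => ⟨hleft x hx y hy, ?_⟩⟩, hTs⟩
  have hu : mul x y + mul y x ∈ T := by
    refine hU ⟨I.add_mem (hIB.2 x hx y (hTI.1 hy)).1 (hIB.2 x hx y (hTI.1 hy)).2, ?_⟩
    refine LinearMap.mem_ker.2 (LinearMap.ext fun z => ?_)
    have h1 := hleib x y z
    have h2 := hleib y x z
    rw [map_add, LinearMap.add_apply, LinearMap.zero_apply]
    rw [← sub_eq_iff_eq_add] at h1 h2
    rw [← h1, ← h2]
    abel
  simpa using T.sub_mem hu (hleft x hx y hy)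

end LeibnizAux

/-- over characteristic zero, a solvable subinvariant subalgebra
is contained in the radical. -/
theorem stmt_12 {F A : Type*} [Field F] [CharZero F]
    [AddCommGroup A] [Module F A] [FiniteDimensional F A]
    (mul : A →ₗ[F] A →ₗ[F] A)
    (hleib : ∀ x y z : A, mul x (mul y z) = mul (mul x y) z + mul y (mul x z))
    (S R : Submodule F A)
    (hS : IsSubinvariantIn mul S ⊤) (hsolv : IsSolvableSub mul S)
    (hR : IsRadicalIn mul ⊤ R) :
    S ≤ R := by
  obtain ⟨t, c, h0, ht, hsub, hid⟩ := hS
  have key : ∀ i ≤ t, ∃ T, S ≤ T ∧ IsIdealIn mul T (c i) ∧ IsSolvableSub mul T := by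
    intro i
    induction i with
    | zero =>
      intro _
      have hs := hsub 0 (Nat.zero_le _)
      rw [h0] at hs ⊢
      exact ⟨S, le_rfl, ⟨le_rfl, fun x hx y hy => ⟨hs x hx y hy, hs y hy x hx⟩⟩, hsolv⟩
    | succ i ih =>
      intro hi
      exact aux_step hleib (hsub i (by omega)) (hid i (by omega)) (ih (by omega))
  obtain ⟨T, hST, hT, hTs⟩ := key t le_rfl
  rw [ht] at hT
  exact hST.trans (hR.2.2 T hT hTs)
end
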